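/- arXiv:0705.3227 — 16 statements merged into one kernel-verified Lean document; each statement's English description precedes it below -/
import Mathlib

section
/- Let ω be a δ-computable simple game. If S ∈ ω, then there exists an initial segment k ≥ 0 of ℕ such that every finite recursive coalition G with G∩k = S∩k is winning. Similarly, if S is a recursive coalition with S ∉ ω, then there exists k ≥ 0 such that every finite recursive coalition G with G∩k = S∩k is losing. -/
/-!
The proof is a diagonalisation through Kleene's second recursion theorem. Let `f` be a partial
recursive extension of the δ-indicator, `χ` the computable characteristic function of `S`, `b` the
value of `f` on the indices of `S`, and `b'` the opposite value. There is a program `c` that knows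
its own index and computes `χ x` as long as `f` has not been seen, within `x` steps, to return `b`
on the index of `c`. From the first stage `k` at which this is seen, `c` looks for a 0-1 string that
begins with the `k`-initial segment of `S` and describes a finite coalition on which `f` returns
`b'`; if it finds one, `c` computes that coalition.

If stage `k` never came, `c` would be an index of `S`, so `f` would return `b` on it after all.
Hence `k` exists. If the search succeeded, `c` would be an index of a finite coalition on
which `f` returns `b'`, while `f` returns `b` on `c` by the choice of `k`. So the search fails, which
says exactly that every finite coalition agreeing with `S` below `k` has the same status as `S`.
This is `exists_stage`.
-/

open Classical in
/-- `e` is a characteristic index for `S`: the `e`-th partial recursive function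
is the (total, 0-1 valued) characteristic function of `S`. -/
def CharIndex (e : ℕ) (S : Set ℕ) : Prop :=
  ∀ x : ℕ, (Denumerable.ofNat Nat.Partrec.Code e).eval x =
    Part.some (if x ∈ S then 1 else 0)

/-- A recursive (computable) coalition: a set of players with a characteristic index. -/
def RecSet (S : Set ℕ) : Prop := ∃ e, CharIndex e S

open Classical in
/-- The simple game `ω` is δ-computable: its δ-indicator has an extension to a
partial recursive function. -/
def DeltaComputable (ω : Set (Set ℕ)) : Prop :=
  ∃ f : ℕ →. ℕ, Nat.Partrec f ∧
    ∀ e S, CharIndex e S → f e = Part.some (if S ∈ ω then 1 else 0)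

open Nat.Partrec (Code)

/-- `initSeg χ k` is the 0-1 string of the values of `χ` at `0, …, k - 1`. -/
def initSeg (χ : ℕ → Bool) (k : ℕ) : List Bool :=
  Nat.rec [] (fun i l => l ++ [χ i]) k

theorem initSeg_eq (χ : ℕ → Bool) (k : ℕ) : initSeg χ k = (List.range k).map χ := by
  induction k with
  | zero => rfl
  | succ k ih =>
    rw [List.range_succ, List.map_append, ← ih]
    rfl

theorem initSeg_computable {χ : ℕ → Bool} (hχ : Computable χ) : Computable (initSeg χ) := by
  refine Computable.nat_rec (f := fun k : ℕ => k) (g := fun _ : ℕ => ([] : List Bool))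
    (h := fun _ p => p.2 ++ [χ p.1]) Computable.id (Computable.const []) ?_
  exact Computable.list_concat.comp (Computable.snd.comp Computable.snd)
    (hχ.comp (Computable.fst.comp Computable.snd))

/-- `c` computes the 0-1 valued function `χ`. -/
def Computes (c : Code) (χ : ℕ → Bool) : Prop :=
  ∀ x, c.eval x = Part.some (χ x).toNat

theorem bool_toNat_primrec : Primrec Bool.toNat := Primrec.dom_finite _

/-- Indices of the finite sets described by 0-1 strings can be found uniformly (the s-m-n
theorem). -/
theorem exists_stringCode :
    ∃ d : List Bool → Code, Computable d ∧ ∀ l, Computes (d l) (fun x => l.getD x false) := by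
  have h : Computable₂ fun (l : List Bool) (x : ℕ) => (l.getD x false).toNat :=
    (bool_toNat_primrec.comp (Primrec.list_getD false)).to_comp
  have h' : Partrec fun n : ℕ =>
      (Part.ofOption (Encodable.decode (α := List Bool) n.unpair.1)).bind
        fun l => Part.some (l.getD n.unpair.2 false).toNat := by
    refine Partrec.bind
      (Computable.ofOption (Computable.decode.comp (Computable.fst.comp Computable.unpair))) ?_
    exact (h.comp Computable.snd
      (Computable.snd.comp (Computable.unpair.comp Computable.fst))).partrec
  obtain ⟨c, hc⟩ := Code.exists_code.1 (Partrec.nat_iff.1 h')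
  refine ⟨fun l => c.curry (Encodable.encode l), ?_, fun l x => ?_⟩
  · exact Code.primrec₂_curry.to_comp.comp (Computable.const c) Computable.encode
  · rw [Code.eval_curry, hc]
    simp

/-- If `f` gives all programs for `χ` the value `b`, and programs for the same 0-1 valued function
the same value, then some initial segment of `χ` keeps `f` from giving a different value `b'` to a
finite continuation of that segment. -/
theorem exists_stage {f : ℕ →. ℕ} (hf : Nat.Partrec f) {χ : ℕ → Bool} (hχ : Computable χ)
    {b b' : ℕ} (hb : b ≠ b')
    (hS : ∀ c : Code, Computes c χ → b ∈ f (Encodable.encode c))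
    (hext : ∀ (c c' : Code) (g : ℕ → Bool), Computes c g → Computes c' g →
      f (Encodable.encode c) = f (Encodable.encode c')) :
    ∃ k, ∀ (l : List Bool) (c : Code),
      Computes c (fun x => (initSeg χ k ++ l).getD x false) → b' ∉ f (Encodable.encode c) := by
  obtain ⟨cf, rfl⟩ := Code.exists_code.1 hf
  obtain ⟨d, hd, hdc⟩ := exists_stringCode
  -- `P c j`: within `j` steps `f` is seen to return `b` on the index of `c`.
  let P : Code → ℕ → Bool := fun c j => decide (Code.evaln j cf (Encodable.encode c) = some b)
  have hP : Computable₂ P := by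
    have h1 : Primrec fun p : Code × ℕ => Code.evaln p.2 cf (Encodable.encode p.1) :=
      Code.primrec_evaln.comp (Primrec.pair (Primrec.pair Primrec.snd (Primrec.const cf))
        (Primrec.encode.comp Primrec.fst))
    exact (Primrec.eq.decide.comp h1 (Primrec.const (some b))).to_comp
  have hPmono : ∀ c i j, i ≤ j → P c i = true → P c j = true := by
    intro c i j hij h
    simp only [P, decide_eq_true_eq] at h ⊢
    exact Code.evaln_mono hij h
  -- `Q k p`: within `p.2` steps `f` is seen to return `b'` on the continuation `p.1` of the
  -- `k`-initial segment of `χ`.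
  let Q : ℕ → List Bool × ℕ → Bool := fun k p =>
    decide (Code.evaln p.2 cf (Encodable.encode (d (initSeg χ k ++ p.1))) = some b')
  have hApp : Computable₂ fun (k : ℕ) (p : List Bool × ℕ) => initSeg χ k ++ p.1 :=
    Computable.list_append.comp ((initSeg_computable hχ).comp Computable.fst)
      (Computable.fst.comp Computable.snd)
  have hQ : Computable₂ Q := by
    have h1 : Computable fun q : ℕ × (List Bool × ℕ) =>
        Code.evaln q.2.2 cf (Encodable.encode (d (initSeg χ q.1 ++ q.2.1))) :=
      Code.primrec_evaln.to_comp.comp (Computable.pair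
        (Computable.pair (Computable.snd.comp Computable.snd) (Computable.const cf))
        (Computable.encode.comp (hd.comp hApp)))
    exact (Primrec.eq.decide.to_comp).comp h1 (Computable.const (some b'))
  let R : ℕ → ℕ → Option (List Bool) := fun k n =>
    (Encodable.decode (α := List Bool × ℕ) n).bind fun p =>
      cond (Q k p) (some (initSeg χ k ++ p.1)) none
  have hR : Computable₂ R := by
    refine Computable.option_bind (Computable.decode.comp Computable.snd) ?_
    have hk : Computable fun q : (ℕ × ℕ) × (List Bool × ℕ) => q.1.1 :=
      Computable.fst.comp Computable.fst
    exact Computable.cond (hQ.comp hk Computable.snd)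
      (Computable.option_some.comp (hApp.comp hk Computable.snd)) (Computable.const none)
  let F : Code → ℕ →. ℕ := fun c x =>
    cond (P c x)
      ((Nat.rfind fun j => Part.some (P c j)).bind fun k =>
        (Nat.rfindOpt (R k)).bind fun l => Part.some (l.getD x false).toNat)
      (Part.some (χ x).toNat)
  have hF : Partrec₂ F := by
    refine Partrec.cond hP ?_ ?_
    · refine Partrec.bind (Partrec.rfind ?_) ?_
      · exact (hP.comp (Computable.fst.comp Computable.fst) Computable.snd).partrec
      · refine Partrec.bind (Partrec.rfindOpt ?_) ?_
        · exact hR.comp (Computable.snd.comp Computable.fst) Computable.snd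
        · exact ((bool_toNat_primrec.comp (Primrec.list_getD false)).to_comp.comp
            (Computable.pair Computable.snd
              (Computable.snd.comp (Computable.fst.comp Computable.fst)))).partrec
    · exact (bool_toNat_primrec.to_comp.comp (hχ.comp Computable.snd)).partrec
  obtain ⟨c, hc⟩ := Code.fixed_point₂ hF
  have hstage : ∃ k, P c k = true := by
    by_contra! hno
    have hcS : Computes c χ := by
      intro x
      rw [hc]
      simp [F, hno x]
    obtain ⟨k, hk⟩ := Code.evaln_complete.1 (hS c hcS)
    exact hno k (by simpa [P] using hk)
  have hbc : b ∈ cf.eval (Encodable.encode c) :=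
    Code.evaln_sound (k := Nat.find hstage) (by simpa [P] using Nat.find_spec hstage)
  have hfind : (Nat.rfind fun j => Part.some (P c j)) = Part.some (Nat.find hstage) := by
    refine Part.eq_some_iff.2 (Nat.mem_rfind.2 ⟨?_, fun {m} hm => ?_⟩)
    · simp [Nat.find_spec hstage]
    · simp [Nat.find_min hstage hm]
  refine ⟨Nat.find hstage, fun l c' hc' hb' => ?_⟩
  generalize hkdef : Nat.find hstage = k at *
  -- A counterexample `l` makes the search succeed, with a possibly different string `m`.
  have hdom : (Nat.rfindOpt (R k)).Dom := by
    rw [Nat.rfindOpt_dom]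
    rw [hext c' _ _ hc' (hdc _)] at hb'
    obtain ⟨t, ht⟩ := Code.evaln_complete.1 hb'
    rw [Option.mem_def] at ht
    exact ⟨Encodable.encode (l, t), initSeg χ k ++ l, by simp [R, Q, ht]⟩
  obtain ⟨m, hm⟩ := Part.dom_iff_mem.1 hdom
  have hmR := Nat.rfindOpt_spec hm
  obtain ⟨n, hn⟩ := hmR
  obtain ⟨p, -, hp⟩ := Option.bind_eq_some_iff.1 hn
  have hQp : Q k p = true := by
    by_contra h
    rw [Bool.not_eq_true] at h
    rw [h] at hp
    cases hp
  have hmp : initSeg χ k ++ p.1 = m := by simpa [hQp] using hp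
  have hcm : Computes c (fun x => m.getD x false) := by
    intro x
    rw [hc]
    cases hx : P c x with
    | true => simp [F, hx, hfind, Part.eq_some_iff.2 hm]
    | false =>
      have hxk : x < k := by
        by_contra! h
        have := hPmono c k x h (hkdef ▸ Nat.find_spec hstage)
        simp [hx] at this
      have hmx : m.getD x false = χ x := by
        rw [← hmp, initSeg_eq, List.getD_append _ _ _ _ (by simpa using hxk)]
        simp [hxk]
      simp only [F, hx, cond_false, hmx]
  have hb'm : b' ∈ cf.eval (Encodable.encode (d m)) := by
    rw [← hmp]
    exact Code.evaln_sound (k := p.2) (by simpa [Q] using hQp)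
  rw [← hext c (d m) _ hcm (hdc m)] at hb'm
  exact hb (Part.mem_unique hbc hb'm)

open Classical in
theorem computes_iff_charIndex (c : Code) (S : Set ℕ) :
    Computes c (fun x => decide (x ∈ S)) ↔ CharIndex (Encodable.encode c) S := by
  unfold Computes CharIndex
  refine forall_congr' fun x => ?_
  by_cases h : x ∈ S <;> simp [h]

open Classical in
theorem RecSet.computable {S : Set ℕ} (hS : RecSet S) :
    Computable fun x => decide (x ∈ S) := by
  obtain ⟨e, he⟩ := hS
  have h : Partrec (Denumerable.ofNat Code e).eval :=
    Partrec.nat_iff.2 (Code.exists_code.2 ⟨_, rfl⟩)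
  have h1 : Computable fun x : ℕ => if x ∈ S then 1 else 0 :=
    h.of_eq he
  refine ((Primrec.eq (α := ℕ)).decide.to_comp.comp h1 (Computable.const 1)).of_eq fun x => ?_
  by_cases hx : x ∈ S <;> simp [hx]

open Classical in
/-- A finite set agreeing with `S` below `k` is described by a 0-1 string that begins with the
`k`-initial segment of `S`. -/
theorem exists_string {S G : Set ℕ} {k : ℕ} (hG : G.Finite)
    (h : G ∩ Set.Iio k = S ∩ Set.Iio k) :
    ∃ l : List Bool, (fun x => (initSeg (fun y => decide (y ∈ S)) k ++ l).getD x false) =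
      fun x => decide (x ∈ G) := by
  obtain ⟨N, hN⟩ := hG.bddAbove
  refine ⟨(List.range (N + 1)).map fun i => decide (k + i ∈ G), funext fun x => ?_⟩
  rw [initSeg_eq]
  rcases lt_or_ge x k with hx | hx
  · have : x ∈ G ↔ x ∈ S := by
      simpa [hx] using Set.ext_iff.1 h x
    rw [List.getD_append _ _ _ _ (by simpa using hx)]
    simp [hx, this]
  · rw [List.getD_append_right _ _ _ _ (by simpa using hx)]
    by_cases hxN : x - k < N + 1
    · simp [List.getD_eq_getElem?_getD, hxN, Nat.add_sub_cancel' hx]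
    · have hxG : x ∉ G := fun hg => hxN (by have := hN hg; omega)
      simp [List.getD_eq_getElem?_getD, hxN, hxG]

open Classical in
/-- Both halves of the theorem at once: finite coalitions agreeing with `S` on a long enough
initial segment have the same status as `S`. -/
theorem exists_determining_segment {ω : Set (Set ℕ)} (hcomp : DeltaComputable ω) {S : Set ℕ}
    (hS : RecSet S) :
    ∃ k : ℕ, ∀ G : Set ℕ, RecSet G → G.Finite →
      G ∩ Set.Iio k = S ∩ Set.Iio k → (G ∈ ω ↔ S ∈ ω) := by
  obtain ⟨f, hf, hfω⟩ := hcomp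
  have hval : ∀ (c : Code) (T : Set ℕ), Computes c (fun x => decide (x ∈ T)) →
      f (Encodable.encode c) = Part.some (if T ∈ ω then 1 else 0) := fun c T h =>
    hfω _ _ ((computes_iff_charIndex c T).1 h)
  obtain ⟨k, hk⟩ := exists_stage hf hS.computable
    (b := if S ∈ ω then 1 else 0) (b' := if S ∈ ω then 0 else 1)
    (by split_ifs <;> simp)
    (fun c hc => by rw [hval c S hc]; exact Part.mem_some _)
    (fun c c' g hc hc' => by
      have hg : g = fun x => @decide (x ∈ {y | g y = true}) (Classical.propDecidable _) := by
        funext x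
        simp
      rw [hg] at hc hc'
      rw [hval _ _ hc, hval _ _ hc'])
  refine ⟨k, fun G hGrec hGfin hGk => ?_⟩
  obtain ⟨l, hl⟩ := exists_string hGfin hGk
  obtain ⟨e, he⟩ := hGrec
  have hc : Computes (Denumerable.ofNat Code e) (fun x => decide (x ∈ G)) :=
    (computes_iff_charIndex _ G).2 (by simpa using he)
  have := hk l _ (by rw [hl]; exact hc)
  rw [hval _ _ hc] at this
  by_cases h1 : G ∈ ω <;> by_cases h2 : S ∈ ω <;> simp_all

/-- Lemma (cutting for finite coalitions): for a δ-computable simple game, a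
winning coalition `S` has an initial segment `k` such that every finite
recursive coalition agreeing with `S` below `k` is winning; similarly for
losing coalitions. -/
theorem stmt0 (ω : Set (Set ℕ)) (hgame : ∀ S ∈ ω, RecSet S)
    (hcomp : DeltaComputable ω) (S : Set ℕ) :
    (S ∈ ω → ∃ k : ℕ, ∀ G : Set ℕ, RecSet G → G.Finite →
      G ∩ Set.Iio k = S ∩ Set.Iio k → G ∈ ω) ∧
    (RecSet S → S ∉ ω → ∃ k : ℕ, ∀ G : Set ℕ, RecSet G → G.Finite →
      G ∩ Set.Iio k = S ∩ Set.Iio k → G ∉ ω) := by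
  refine ⟨fun hS => ?_, fun hrec hS => ?_⟩
  · obtain ⟨k, hk⟩ := exists_determining_segment hcomp (hgame S hS)
    exact ⟨k, fun G h1 h2 h3 => (hk G h1 h2 h3).2 hS⟩
  · obtain ⟨k, hk⟩ := exists_determining_segment hcomp hrec
    exact ⟨k, fun G h1 h2 h3 h => hS ((hk G h1 h2 h3).1 h)⟩
end

section
/- Let ω be a δ-computable simple game. (i) If a recursive coalition S is winning, then there exists an initial segment k ≥ 0 of ℕ such that every (finite or infinite) recursive coalition G with G∩k = S∩k is winning. (ii) If S is losing, then there exists k ≥ 0 such that every recursive coalition G with G∩k = S∩k is losing. -/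
open Nat.Partrec (Code)
open Encodable Denumerable

/-- The characteristic function, evaluated at `x`, of the set that agrees with the set of
characteristic function `χ` below `p.1`, and from there on with `{x | p.2[x] = 1}` (a finite set,
since positions beyond the end of the list `p.2` count as `0`). -/
def patch (χ : ℕ → ℕ) (p : ℕ × List ℕ) (x : ℕ) : ℕ :=
  if x < p.1 then χ x else if p.2.getD x 0 = 1 then 1 else 0

theorem patch_computable {χ : ℕ → ℕ} (hχ : Computable χ) : Computable₂ (patch χ) := by
  have h1 : PrimrecPred fun a : (ℕ × List ℕ) × ℕ => a.2 < a.1.1 :=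
    Primrec.nat_lt.comp Primrec.snd (Primrec.fst.comp Primrec.fst)
  have h2 : PrimrecPred fun a : (ℕ × List ℕ) × ℕ => a.1.2.getD a.2 0 = 1 :=
    Primrec.eq.comp
      ((Primrec.list_getD 0).comp (Primrec.snd.comp Primrec.fst) Primrec.snd) (Primrec.const 1)
  have h3 : Computable fun a : (ℕ × List ℕ) × ℕ => if a.1.2.getD a.2 0 = 1 then 1 else 0 :=
    (Primrec.ite h2 (Primrec.const 1) (Primrec.const 0)).to_comp
  have h4 := Computable.cond h1.decide.to_comp (hχ.comp Computable.snd) h3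
  exact h4.of_eq fun a => by simp [patch, Bool.cond_decide]

/-- One step of the search for a patched set on the other side: the triple coded by `m` is
accepted if the program `cf` returns `v` on `c` within `t` steps and `1 - v` on the index
(computed by `cb`) of the patched set within `s` steps. -/
def searchStep (cf cb : Code) (v : ℕ) (c : Code) (m : ℕ) : Option (ℕ × List ℕ) :=
  let q := ofNat ((ℕ × List ℕ) × ℕ) m
  if Code.evaln q.1.1 cf (encode c) = some v ∧
      Code.evaln q.2 cf (encode (Code.curry cb (encode q.1))) = some (1 - v)
  then some q.1 else none

theorem searchStep_primrec (cf cb : Code) (v : ℕ) : Primrec₂ (searchStep cf cb v) := by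
  have hq : Primrec fun a : Code × ℕ => ofNat ((ℕ × List ℕ) × ℕ) a.2 :=
    (Primrec.ofNat _).comp Primrec.snd
  have hq1 := Primrec.fst.comp hq
  have h1 : PrimrecPred fun a : Code × ℕ =>
      Code.evaln (ofNat ((ℕ × List ℕ) × ℕ) a.2).1.1 cf (encode a.1) = some v :=
    Primrec.eq.comp (Code.primrec_evaln.comp
      (((Primrec.fst.comp hq1).pair (Primrec.const cf)).pair
        (Primrec.encode.comp Primrec.fst))) (Primrec.const (some v))
  have h2 : PrimrecPred fun a : Code × ℕ =>
      Code.evaln (ofNat ((ℕ × List ℕ) × ℕ) a.2).2 cf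
        (encode (Code.curry cb (encode (ofNat ((ℕ × List ℕ) × ℕ) a.2).1))) = some (1 - v) :=
    Primrec.eq.comp (Code.primrec_evaln.comp
      (((Primrec.snd.comp hq).pair (Primrec.const cf)).pair
        (Primrec.encode.comp (Code.primrec₂_curry.comp (Primrec.const cb)
          (Primrec.encode.comp hq1))))) (Primrec.const (some (1 - v)))
  exact (Primrec.ite (h1.and h2) (Primrec.option_some.comp hq1) (Primrec.const none)).of_eq
    fun a => rfl

/-- The self-referential program, `c` standing for its own code: at `x`, copy `χ` if `cf` has not
returned `v` on `c` within `x` steps, and otherwise copy the patched set found by the search. The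
search does not depend on `x`, so a single set is copied from then on. -/
def diag (χ : ℕ → ℕ) (cf cb : Code) (v : ℕ) (c : Code) (x : ℕ) : Part ℕ :=
  bif decide (Code.evaln x cf (encode c) = some v) then
    (Nat.rfindOpt (searchStep cf cb v c)).map fun p => patch χ p x
  else Part.some (χ x)

theorem diag_partrec {χ : ℕ → ℕ} (hχ : Computable χ) (cf cb : Code) (v : ℕ) :
    Partrec₂ (diag χ cf cb v) := by
  have h1 : PrimrecPred fun a : Code × ℕ => Code.evaln a.2 cf (encode a.1) = some v :=
    Primrec.eq.comp (Code.primrec_evaln.comp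
      ((Primrec.snd.pair (Primrec.const cf)).pair
        (Primrec.encode.comp Primrec.fst))) (Primrec.const (some v))
  have h2 : Partrec fun a : Code × ℕ => Nat.rfindOpt (searchStep cf cb v a.1) :=
    Partrec.rfindOpt ((searchStep_primrec cf cb v).to_comp.comp
      (Computable.fst.comp Computable.fst) Computable.snd)
  have h3 : Computable₂ fun (a : Code × ℕ) (p : ℕ × List ℕ) => patch χ p a.2 :=
    (patch_computable hχ).comp Computable.snd (Computable.snd.comp Computable.fst)
  exact Partrec.cond h1.decide.to_comp (h2.map h3) (hχ.comp Computable.snd)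

open Classical in
/-- Every finite set agreeing with `S` below `k` is a patched version of `S`. -/
theorem exists_patch {S F : Set ℕ} (hF : F.Finite) {k : ℕ}
    (h : F ∩ Set.Iio k = S ∩ Set.Iio k) :
    ∃ l : List ℕ, ∀ x, patch (fun y => if y ∈ S then 1 else 0) (k, l) x =
      if x ∈ F then 1 else 0 := by
  obtain ⟨N, hN⟩ := hF.bddAbove
  refine ⟨(List.range (N + 1)).map fun y => if y ∈ F then 1 else 0, fun x => ?_⟩
  by_cases hx : x < k
  · have : x ∈ F ↔ x ∈ S := by
      have := Set.ext_iff.1 h x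
      simpa [hx] using this
    simp [patch, hx, this]
  · by_cases hxN : x < N + 1
    · by_cases hxF : x ∈ F <;> simp [patch, hx, hxN, hxF, List.getD]
    · have hxF : x ∉ F := fun hxF => hxN (Nat.lt_succ_of_le (hN hxF))
      simp [patch, hx, hxN, hxF, List.getD]

open Classical in
/-- The cutting property for finite sets, by the recursion theorem applied to `diag`. -/
theorem exists_cut_finite {ω : Set (Set ℕ)} (hcomp : DeltaComputable ω) {S : Set ℕ}
    (hS : RecSet S) :
    ∃ k : ℕ, ∀ F : Set ℕ, F.Finite → F ∩ Set.Iio k = S ∩ Set.Iio k → (F ∈ ω ↔ S ∈ ω) := by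
  obtain ⟨f, hf, hfω⟩ := hcomp
  obtain ⟨cf, rfl⟩ := Code.exists_code.1 hf
  obtain ⟨e₀, he₀⟩ := hS
  set χ : ℕ → ℕ := fun y => if y ∈ S then 1 else 0 with hχdef
  have hχ : Computable χ := by
    have h : Partrec (Code.eval (ofNat Code e₀)) :=
      Partrec.nat_iff.2 (Code.exists_code.2 ⟨_, rfl⟩)
    exact h.of_eq he₀
  obtain ⟨cb, hcb⟩ : ∃ cb : Code, ∀ p x,
      Code.eval (Code.curry cb (encode p)) x = Part.some (patch χ p x) := by
    have h : Computable fun n : ℕ =>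
        patch χ (ofNat (ℕ × List ℕ) n.unpair.1) n.unpair.2 :=
      (patch_computable hχ).comp
        ((Primrec.ofNat _).comp (Primrec.fst.comp Primrec.unpair)).to_comp
        (Primrec.snd.comp Primrec.unpair).to_comp
    obtain ⟨cb, hcb⟩ := Code.exists_code.1 (Partrec.nat_iff.1 h)
    refine ⟨cb, fun p x => ?_⟩
    rw [Code.eval_curry, hcb]
    simp only [PFun.coe_val, Nat.unpair_pair, ofNat_encode]
  -- Correctness of `f`, for programs instead of their numbers.
  have hcode : ∀ (c : Code) (T : Set ℕ),
      (∀ x, c.eval x = Part.some (if x ∈ T then 1 else 0)) →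
      cf.eval (encode c) = Part.some (if T ∈ ω then 1 else 0) := by
    intro c T h
    exact hfω (encode c) T fun x => by rw [ofNat_encode]; exact h x
  by_contra! hcon
  set v : ℕ := if S ∈ ω then 1 else 0 with hv
  obtain ⟨c, hc⟩ := Code.fixed_point₂ (diag_partrec hχ cf cb v)
  have hcv : v ∈ cf.eval (encode c) := by
    by_contra hne
    have : cf.eval (encode c) = Part.some v := by
      refine hcode c S fun x => ?_
      have hx : Code.evaln x cf (encode c) ≠ some v := fun hx => hne (Code.evaln_sound hx)
      rw [hc]
      simp [diag, hx, hχdef]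
    exact hne (by rw [this]; exact Part.mem_some v)
  obtain ⟨T, hT⟩ := Code.evaln_complete.1 hcv
  have hdom : (Nat.rfindOpt (searchStep cf cb v c)).Dom := by
    rw [Nat.rfindOpt_dom]
    obtain ⟨F, hFfin, hFS, hFω⟩ := hcon T
    obtain ⟨l, hl⟩ := exists_patch hFfin hFS
    have h1 : 1 - v ∈ cf.eval (encode (Code.curry cb (encode (T, l)))) := by
      rw [hcode _ F fun x => by rw [hcb, hl]]
      rcases hFω with ⟨h1, h2⟩ | ⟨h1, h2⟩ <;> simp [hv, h1, h2]
    obtain ⟨s, hs⟩ := Code.evaln_complete.1 h1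
    refine ⟨encode ((T, l), s), (T, l), ?_⟩
    simp only [searchStep, ofNat_encode]
    rw [if_pos ⟨hT, hs⟩]
    rfl
  obtain ⟨p, hp⟩ := Part.dom_iff_mem.1 hdom
  obtain ⟨m, hm⟩ := Nat.rfindOpt_spec hp
  obtain ⟨ht, s, hs⟩ : Code.evaln p.1 cf (encode c) = some v ∧
      ∃ s, Code.evaln s cf (encode (Code.curry cb (encode p))) = some (1 - v) := by
    simp only [searchStep] at hm
    split_ifs at hm with h
    · obtain rfl := Option.some.inj hm
      exact ⟨h.1, _, h.2⟩
    · cases hm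
  -- Where `c` still copies `S`, the run of `f` takes more than `x` steps, so `x < p.1`
  -- and copying `S` is the same as copying the patched set.
  have hceval : ∀ x, c.eval x = Part.some (patch χ p x) := by
    intro x
    rw [hc]
    by_cases hx : Code.evaln x cf (encode c) = some v
    · simp [diag, hx, Part.eq_some_iff.2 hp]
    · have hlt : x < p.1 := by
        by_contra hge
        exact hx (Code.evaln_mono (not_lt.1 hge) ht)
      simp [diag, hx, patch, hlt]
  obtain ⟨P, hP⟩ : ∃ P : Set ℕ, ∀ x, patch χ p x = if x ∈ P then 1 else 0 := by
    refine ⟨{y | patch χ p y = 1}, fun x => ?_⟩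
    have : patch χ p x = 0 ∨ patch χ p x = 1 := by
      simp only [patch, hχdef]
      split_ifs <;> simp
    rcases this with h | h <;> simp [h]
  have e1 := hcode c P fun x => by rw [hceval, ← hP]
  have e2 := hcode (Code.curry cb (encode p)) P fun x => by rw [hcb, ← hP]
  have h1 := hcv
  have h2 := Code.evaln_sound (Option.mem_def.2 hs)
  rw [e1, Part.mem_some_iff] at h1
  rw [e2, Part.mem_some_iff] at h2
  have hv2 : v = 0 ∨ v = 1 := by rw [hv]; split_ifs <;> simp
  omega

theorem exists_cut {ω : Set (Set ℕ)} (hcomp : DeltaComputable ω) {S : Set ℕ}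
    (hS : RecSet S) :
    ∃ k : ℕ, ∀ G : Set ℕ, RecSet G → G ∩ Set.Iio k = S ∩ Set.Iio k → (G ∈ ω ↔ S ∈ ω) := by
  obtain ⟨k, hk⟩ := exists_cut_finite hcomp hS
  refine ⟨k, fun G hG hGS => ?_⟩
  obtain ⟨k', hk'⟩ := exists_cut_finite hcomp hG
  have hfin : (G ∩ Set.Iio (max k k')).Finite := (Set.finite_Iio _).inter_of_right _
  have h1 := hk _ hfin (by
    rw [Set.inter_assoc, Set.Iio_inter_Iio, inf_eq_right.2 (le_max_left k k'), hGS])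
  have h2 := hk' _ hfin (by
    rw [Set.inter_assoc, Set.Iio_inter_Iio, inf_eq_right.2 (le_max_right k k')])
  exact h2.symm.trans h1

/-- Proposition (cutting): for a δ-computable simple game, a winning coalition
`S` has an initial segment `k` such that every (finite or infinite) recursive
coalition agreeing with `S` below `k` is winning; similarly for losing
coalitions. -/
theorem stmt1 (ω : Set (Set ℕ)) (hgame : ∀ S ∈ ω, RecSet S)
    (hcomp : DeltaComputable ω) (S : Set ℕ) :
    (S ∈ ω → ∃ k : ℕ, ∀ G : Set ℕ, RecSet G →
      G ∩ Set.Iio k = S ∩ Set.Iio k → G ∈ ω) ∧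
    (RecSet S → S ∉ ω → ∃ k : ℕ, ∀ G : Set ℕ, RecSet G →
      G ∩ Set.Iio k = S ∩ Set.Iio k → G ∉ ω) := by
  refine ⟨fun hS => ?_, fun hrec hS => ?_⟩
  · obtain ⟨k, hk⟩ := exists_cut hcomp (hgame S hS)
    exact ⟨k, fun G hG h => (hk G hG h).2 hS⟩
  · obtain ⟨k, hk⟩ := exists_cut hcomp hrec
    exact ⟨k, fun G hG h hGω => hS ((hk G hG h).1 hGω)⟩
end

section
/- Let ω be a δ-computable simple game and S a recursive coalition. If the initial segment S∩k is determining for finite coalitions, then S∩k is determining. -/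
open Classical in
theorem computable_indicator {G : Set ℕ} (hG : RecSet G) :
    Computable fun x => if x ∈ G then 1 else 0 := by
  obtain ⟨e, he⟩ := hG
  refine (Nat.Partrec.Code.eval_part.comp
    (Computable.const (Denumerable.ofNat Nat.Partrec.Code e)) Computable.id).of_eq ?_
  intro x
  exact he x

/-- In a δ-computable game, the winning status of a recursive coalition `G` is shared by a finite
recursive coalition that agrees with `G` below `k`. -/
theorem exists_finite_agreeing {ω : Set (Set ℕ)} (hcomp : DeltaComputable ω) {G : Set ℕ}
    (hG : RecSet G) (k : ℕ) :
    ∃ H : Set ℕ, RecSet H ∧ H.Finite ∧ H ∩ Set.Iio k = G ∩ Set.Iio k ∧ (H ∈ ω ↔ G ∈ ω) := by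
  classical
  obtain ⟨f, hf, hω⟩ := hcomp
  obtain ⟨cf, rfl⟩ := Nat.Partrec.Code.exists_code.1 hf
  set b : ℕ := if G ∈ ω then 1 else 0 with hb
  have hev : Primrec fun p : Nat.Partrec.Code × ℕ => cf.evaln p.2 (Encodable.encode p.1) :=
    Nat.Partrec.Code.primrec_evaln.comp
      ((Primrec.snd.pair (Primrec.const cf)).pair (Primrec.encode.comp Primrec.fst))
  have hcopy : PrimrecPred fun p : Nat.Partrec.Code × ℕ =>
      p.2 < k ∨ ¬ cf.evaln p.2 (Encodable.encode p.1) = some b :=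
    (Primrec.nat_lt.comp Primrec.snd (Primrec.const k)).or
      (Primrec.eq.comp hev (Primrec.const (some b))).not
  have hstep : Computable₂ fun (c : Nat.Partrec.Code) (x : ℕ) =>
      if x < k ∨ ¬ cf.evaln x (Encodable.encode c) = some b then
        (if x ∈ G then 1 else 0) else 0 :=
    (Computable.cond hcopy.computablePred.decide ((computable_indicator hG).comp Computable.snd)
      (Computable.const 0)).of_eq fun _ => Bool.cond_decide _ _ _
  obtain ⟨c, hc⟩ := Nat.Partrec.Code.fixed_point₂ hstep.partrec₂
  set H : Set ℕ := {x | x ∈ G ∧ (x < k ∨ ¬ cf.evaln x (Encodable.encode c) = some b)} with hH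
  have hind : CharIndex (Encodable.encode c) H := by
    intro x
    rw [Denumerable.ofNat_encode, hc]
    change Part.some _ = Part.some _
    congr 1
    simp only [hH, Set.mem_ofPred_eq]
    split_ifs <;> tauto
  -- If `f` never produced `b` on the index of `c`, then `H` would be `G`.
  obtain ⟨s, hs⟩ : ∃ s, b ∈ cf.evaln s (Encodable.encode c) := by
    by_contra! hnever
    have hHG : H = G := by
      ext x
      exact ⟨fun h => h.1, fun h => ⟨h, Or.inr (hnever x)⟩⟩
    have hval := hω _ _ hind
    rw [hHG] at hval
    obtain ⟨s, hs⟩ := Nat.Partrec.Code.evaln_complete.1 (Part.eq_some_iff.1 hval)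
    exact hnever s hs
  refine ⟨H, ⟨_, hind⟩, (Set.finite_Iio (max k s)).subset ?_, ?_, ?_⟩
  · rintro x ⟨-, hx | hx⟩
    · exact lt_max_of_lt_left hx
    · rw [Set.mem_Iio]
      refine lt_max_of_lt_right (lt_of_not_ge fun hsx => hx ?_)
      exact Nat.Partrec.Code.evaln_mono hsx hs
  · ext x
    simp only [hH, Set.mem_inter_iff, Set.mem_ofPred_eq, Set.mem_Iio]
    tauto
  · have hval := Part.mem_unique (Nat.Partrec.Code.evaln_sound hs)
      (Part.eq_some_iff.1 (hω _ _ hind))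
    rw [hb] at hval
    split_ifs at hval <;> tauto

/-- If the initial segment `S ∩ k` of a recursive coalition `S` is determining
for finite coalitions, then it is determining (for a δ-computable simple game). -/
theorem stmt2 (ω : Set (Set ℕ)) (hgame : ∀ S ∈ ω, RecSet S)
    (hcomp : DeltaComputable ω) (S : Set ℕ) (hS : RecSet S) (k : ℕ)
    (hdetfin :
      (∀ G : Set ℕ, RecSet G → G.Finite → G ∩ Set.Iio k = S ∩ Set.Iio k → G ∈ ω) ∨
      (∀ G : Set ℕ, RecSet G → G.Finite → G ∩ Set.Iio k = S ∩ Set.Iio k → G ∉ ω)) :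
    (∀ G : Set ℕ, RecSet G → G ∩ Set.Iio k = S ∩ Set.Iio k → G ∈ ω) ∨
    (∀ G : Set ℕ, RecSet G → G ∩ Set.Iio k = S ∩ Set.Iio k → G ∉ ω) := by
  refine hdetfin.imp ?_ ?_
  all_goals
    intro h G hG hGS
    obtain ⟨H, hH, hfin, hHG, hiff⟩ := exists_finite_agreeing hcomp hG k
    have hHω := h H hH hfin (hHG.trans hGS)
    rwa [hiff] at hHω
end

section
/- Suppose that a simple game ω has a finite carrier. Then ω is δ-computable. -/
open Classical in
/-- Whether the trace `F ∩ T` on a finite set `F` lies in `ω` can be decided from a characteristic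
index of `T`. The collection `ω` is arbitrary, as the induction replaces it by
`{U | insert a U ∈ ω}`. -/
theorem exists_partrec_trace (F : Finset ℕ) : ∀ ω : Set (Set ℕ),
    ∃ f : ℕ →. ℕ, Partrec f ∧
      ∀ e T, CharIndex e T → f e = Part.some (if (F : Set ℕ) ∩ T ∈ ω then 1 else 0) := by
  induction F using Finset.induction_on with
  | empty =>
    intro ω
    refine ⟨fun _ => Part.some (if (∅ : Set ℕ) ∈ ω then 1 else 0),
      (Computable.const (if (∅ : Set ℕ) ∈ ω then 1 else 0)).partrec, ?_⟩
    intro e T _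
    simp
  | insert a F _ ih =>
    intro ω
    obtain ⟨f, hf, hf'⟩ := ih ω
    obtain ⟨g, hg, hg'⟩ := ih {U | insert a U ∈ ω}
    -- Ask whether `a ∈ T`, then consult the table for `T` with `a` or without `a`.
    refine ⟨fun e => ((Denumerable.ofNat Nat.Partrec.Code e).eval a).bind
      fun v => bif v == 0 then f e else g e, ?_, ?_⟩
    · refine Partrec.bind
        (Nat.Partrec.Code.eval_part.comp (Computable.ofNat _) (Computable.const a)) ?_
      exact Partrec.cond
        ((Primrec.beq (α := ℕ)).to_comp.comp Computable.snd (Computable.const 0))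
        (hf.comp Computable.fst) (hg.comp Computable.fst)
    · intro e T h
      by_cases ha : a ∈ T
      · simp [h a, ha, hg' e T h, Set.insert_inter_of_mem]
      · simp [h a, ha, hf' e T h, Set.insert_inter_of_notMem]

/-- A simple game with a finite carrier is δ-computable. -/
theorem stmt4 (ω : Set (Set ℕ)) (hgame : ∀ S ∈ ω, RecSet S)
    (S : Set ℕ) (hS : RecSet S) (hfin : S.Finite)
    (hcarrier : ∀ T : Set ℕ, RecSet T → (T ∈ ω ↔ S ∩ T ∈ ω)) :
    DeltaComputable ω := by
  obtain ⟨f, hf, hf'⟩ := exists_partrec_trace hfin.toFinset ω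
  refine ⟨f, Partrec.nat_iff.1 hf, fun e T h => ?_⟩
  rw [hf' e T h, hfin.coe_toFinset]
  have hT := hcarrier T ⟨e, h⟩
  by_cases hω : T ∈ ω
  · rw [if_pos hω, if_pos (hT.1 hω)]
  · rw [if_neg hω, if_neg (mt hT.2 hω)]
end

section
/- Suppose that a simple game ω has an infinite winning coalition S ∈ ω such that for each k ∈ ℕ, the set {i ∈ S : i < k} (the k-initial segment of S, viewed as a finite coalition) is losing. Then ω is not δ-computable. -/
open Nat.Partrec (Code)

/-- For a total `g` and a code `d`, some code `c` computes `g`, switched to `0` from the stage on at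
which `d` is seen to output `1` on the code number of `c`. -/
theorem exists_self_switching_code (d : Code) (g : ℕ → ℕ) (hg : Computable g) :
    ∃ c : Code, ∀ x, c.eval x =
      Part.some (if Code.evaln x d (Encodable.encode c) = some 1 then 0 else g x) := by
  have hev : Computable fun p : Code × ℕ => Code.evaln p.2 d (Encodable.encode p.1) :=
    (Code.primrec_evaln.comp
      ((Primrec.snd.pair (Primrec.const d)).pair (Primrec.encode.comp Primrec.fst))).to_comp
  have hdec : Computable fun p : Code × ℕ =>
      decide (Code.evaln p.2 d (Encodable.encode p.1) = some 1) :=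
    (Primrec.eq (α := Option ℕ)).decide.to_comp.comp hev (Computable.const (some 1))
  have hF : Partrec₂ fun (c : Code) (x : ℕ) =>
      (Part.some (bif decide (Code.evaln x d (Encodable.encode c) = some 1)
        then 0 else g x) : Part ℕ) :=
    Computable.cond hdec (Computable.const 0) (hg.comp Computable.snd)
  obtain ⟨c, hc⟩ := Code.fixed_point₂ hF
  exact ⟨c, fun x => by simp only [hc, Bool.cond_decide]⟩

/-- If a simple game has an infinite winning coalition all of whose initial
segments are losing, then it is not δ-computable. -/
theorem stmt5 (ω : Set (Set ℕ)) (hgame : ∀ S ∈ ω, RecSet S)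
    (S : Set ℕ) (hSwin : S ∈ ω) (hinf : S.Infinite)
    (hseg : ∀ k : ℕ, S ∩ Set.Iio k ∉ ω) :
    ¬ DeltaComputable ω := by
  classical
  rintro ⟨f, hf, hext⟩
  obtain ⟨d, rfl⟩ := Code.exists_code.1 hf
  obtain ⟨s, hs⟩ := hgame S hSwin
  have hg : Computable fun x => if x ∈ S then (1 : ℕ) else 0 := by
    have h : Partrec (Denumerable.ofNat Code s).eval :=
      Partrec.nat_iff.2 (Code.exists_code.2 ⟨_, rfl⟩)
    refine h.of_eq fun x => ?_
    rw [hs x]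
    simp
  obtain ⟨c, hc⟩ := exists_self_switching_code d _ hg
  by_cases hk : ∃ k, Code.evaln k d (Encodable.encode c) = some 1
  · have hone : 1 ∈ d.eval (Encodable.encode c) :=
      Code.evaln_sound (Nat.find_spec hk)
    have hidx : CharIndex (Encodable.encode c) (S ∩ Set.Iio (Nat.find hk)) := by
      intro x
      rw [Denumerable.ofNat_encode, hc x]
      by_cases hx : x < Nat.find hk
      · simp [Nat.find_min hk hx, hx]
      · have : Code.evaln x d (Encodable.encode c) = some 1 :=
          Code.evaln_mono (not_lt.1 hx) (Nat.find_spec hk)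
        rw [if_pos this, if_neg fun h => hx h.2]
    rw [hext _ _ hidx, if_neg (hseg _)] at hone
    simp at hone
  · have hidx : CharIndex (Encodable.encode c) S := by
      intro x
      rw [Denumerable.ofNat_encode, hc x, if_neg fun h => hk ⟨x, h⟩]
    have hone : 1 ∈ d.eval (Encodable.encode c) := by
      rw [hext _ _ hidx, if_pos hSwin]
      exact Part.mem_some 1
    exact hk (Code.evaln_complete.1 hone)
end

section
/- Suppose that ∅ ∉ ω and that the simple game ω has an infinite coalition S ∈ ω such that for each k ∈ ℕ, the difference S∖k = {s ∈ S : s ≥ k} is winning. Then ω is not δ-computable. -/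
open Classical in
/-- A coalition with a characteristic index has a computable characteristic function. -/
theorem CharIndex.computable {e : ℕ} {S : Set ℕ} (h : CharIndex e S) :
    Computable (fun x => if x ∈ S then 1 else 0 : ℕ → ℕ) := by
  have h1 : Partrec (Nat.Partrec.Code.eval (Denumerable.ofNat Nat.Partrec.Code e)) :=
    Nat.Partrec.Code.eval_part.comp (Computable.const _) Computable.id
  exact h1.of_eq h

/-- The self-referential program: on input `x` it outputs `χ x` if `cf`, run for `x` steps on the
program's own index, has answered `0`, and it outputs `0` otherwise. -/
theorem exists_delayed_code (cf : Nat.Partrec.Code) {χ : ℕ → ℕ} (hχ : Computable χ) :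
    ∃ c : Nat.Partrec.Code, ∀ x, c.eval x =
      Part.some (if cf.evaln x (Encodable.encode c) = some 0 then χ x else 0) := by
  have hev : Computable (fun p : Nat.Partrec.Code × ℕ =>
      cf.evaln p.2 (Encodable.encode p.1)) :=
    (Nat.Partrec.Code.primrec_evaln.comp
      (Primrec.pair (Primrec.pair Primrec.snd (Primrec.const cf))
        (Primrec.encode.comp Primrec.fst))).to_comp
  have hb : Computable (fun p : Nat.Partrec.Code × ℕ =>
      decide (cf.evaln p.2 (Encodable.encode p.1) = some 0)) :=
    (Primrec.eq.comp Primrec.id (Primrec.const (some 0))).decide.to_comp.comp hev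
  have hF : Computable (fun p : Nat.Partrec.Code × ℕ =>
      if cf.evaln p.2 (Encodable.encode p.1) = some 0 then χ p.2 else 0) :=
    (Computable.cond hb (hχ.comp Computable.snd) (Computable.const 0)).of_eq fun p => by
      by_cases h : cf.evaln p.2 (Encodable.encode p.1) = some 0 <;> simp [h]
  obtain ⟨c, hc⟩ := Nat.Partrec.Code.fixed_point₂
    (f := fun c x => Part.some (if cf.evaln x (Encodable.encode c) = some 0 then χ x else 0)) hF
  exact ⟨c, fun x => congrFun hc x⟩

/-- If `∅ ∉ ω` and `ω` has an infinite winning coalition `S` all of whose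
tails `S ∖ k = {s ∈ S : s ≥ k}` are winning, then `ω` is not δ-computable. -/
theorem stmt7 (ω : Set (Set ℕ)) (hgame : ∀ S ∈ ω, RecSet S)
    (hempty : ∅ ∉ ω) (S : Set ℕ) (hSwin : S ∈ ω) (hinf : S.Infinite)
    (htail : ∀ k : ℕ, {s ∈ S | k ≤ s} ∈ ω) :
    ¬ DeltaComputable ω := by
  classical
  rintro ⟨f, hf, hfω⟩
  obtain ⟨cf, rfl⟩ := Nat.Partrec.Code.exists_code.1 hf
  obtain ⟨e, he⟩ := hgame S hSwin
  obtain ⟨c, hc⟩ := exists_delayed_code cf he.computable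
  by_cases h : ∃ k, cf.evaln k (Encodable.encode c) = some 0
  · have hk := Nat.find_spec h
    have hidx : CharIndex (Encodable.encode c) {s ∈ S | Nat.find h ≤ s} := by
      intro x
      rw [Denumerable.ofNat_encode, hc]
      by_cases hx : Nat.find h ≤ x
      · have h0 : cf.evaln x (Encodable.encode c) = some 0 :=
          Nat.Partrec.Code.evaln_mono hx hk
        simp only [h0, if_true, Set.mem_ofPred_eq, hx, and_true]
      · have h0 : ¬ cf.evaln x (Encodable.encode c) = some 0 :=
          Nat.find_min h (not_le.1 hx)
        simp only [h0, if_false, Set.mem_ofPred_eq, hx, and_false]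
    have h1 := hfω _ _ hidx
    rw [if_pos (htail _)] at h1
    have h2 := Nat.Partrec.Code.evaln_sound hk
    rw [h1] at h2
    exact absurd (Part.mem_some_iff.1 h2) (by decide)
  · have hidx : CharIndex (Encodable.encode c) ∅ := by
      intro x
      rw [Denumerable.ofNat_encode, hc, if_neg (fun h0 => h ⟨x, h0⟩)]
      simp
    have h1 := hfω _ _ hidx
    rw [if_neg hempty] at h1
    have h2 : 0 ∈ cf.eval (Encodable.encode c) := by rw [h1]; exact Part.mem_some _
    exact h (Nat.Partrec.Code.evaln_complete.1 h2)
end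

section
/- Suppose that a δ-computable simple game ω has a losing coalition (a recursive coalition not in ω). Then ω has both a finite losing coalition and a cofinite losing coalition. -/
open Nat.Partrec (Code)
open Nat.Partrec.Code

/-- The self-referential construction: for each `b ∈ {0, 1}` there is a losing coalition whose
characteristic function is eventually equal to `b`. -/
theorem exists_losing_eventually (ω : Set (Set ℕ)) (hcomp : DeltaComputable ω)
    (hlose : ∃ S : Set ℕ, RecSet S ∧ S ∉ ω) (b : ℕ) (hb : b = 0 ∨ b = 1) :
    ∃ T : Set ℕ, RecSet T ∧ T ∉ ω ∧ ∃ k, ∀ x, k ≤ x → (x ∈ T ↔ b = 1) := by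
  classical
  obtain ⟨f, hf, hfω⟩ := hcomp
  obtain ⟨S, ⟨e, he⟩, hS⟩ := hlose
  obtain ⟨cf, rfl⟩ := exists_code.1 hf
  set χ : ℕ → ℕ := fun x => if x ∈ S then 1 else 0 with hχ
  have hχc : Computable χ := by
    have h : Partrec (eval (Denumerable.ofNat Code e)) :=
      Partrec.nat_iff.2 (exists_code.2 ⟨_, rfl⟩)
    refine h.of_eq fun x => ?_
    rw [he x]
    simp [hχ]
  let g : Code → ℕ → ℕ := fun c x =>
    if evaln x cf (Encodable.encode c) = some 0 then b else χ x
  have hg : Computable₂ g := by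
    have hsim : Computable fun p : Code × ℕ => evaln p.2 cf (Encodable.encode p.1) :=
      (primrec_evaln.comp (((Primrec.snd.pair (Primrec.const cf))).pair
        (Primrec.encode.comp Primrec.fst))).to_comp
    have hdec : Computable fun p : Code × ℕ =>
        decide (evaln p.2 cf (Encodable.encode p.1) = some 0) :=
      (Primrec.eq.decide.to_comp).comp hsim (Computable.const (some 0))
    exact (Computable.cond hdec (Computable.const b) (hχc.comp Computable.snd)).of_eq
      fun p => by simp [g, Bool.cond_decide]
  obtain ⟨c, hc⟩ := fixed_point₂ (f := fun c x => Part.some (g c x)) hg.partrec₂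
  have hg01 : ∀ x, g c x = 0 ∨ g c x = 1 := by
    intro x
    simp only [g, hχ]
    split_ifs <;> simp [hb]
  have hT : CharIndex (Encodable.encode c) {x | g c x = 1} := by
    intro x
    rw [Denumerable.ofNat_encode, hc]
    rcases hg01 x with h | h <;> simp [h]
  have h0 : (0 : ℕ) ∈ eval cf (Encodable.encode c) := by
    by_contra hne
    have hgχ : ∀ x, g c x = χ x := fun x => if_neg fun h => hne (evaln_sound h)
    have hcS : CharIndex (Encodable.encode c) S := by
      intro x
      rw [Denumerable.ofNat_encode, hc]
      simp only [hgχ, hχ]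
    apply hne
    rw [hfω _ _ hcS, if_neg hS]
    exact Part.mem_some 0
  refine ⟨_, ⟨_, hT⟩, fun hTω => ?_, ?_⟩
  · rw [hfω _ _ hT, if_pos hTω] at h0
    simp at h0
  · obtain ⟨k, hk⟩ := evaln_complete.1 h0
    refine ⟨k, fun x hx => ?_⟩
    have hx0 : evaln x cf (Encodable.encode c) = some 0 := evaln_mono hx hk
    simp [g, hx0]

/-- A δ-computable simple game with a losing coalition has both a finite losing
coalition and a cofinite losing coalition. -/
theorem stmt8 (ω : Set (Set ℕ)) (hgame : ∀ S ∈ ω, RecSet S)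
    (hcomp : DeltaComputable ω) (hlose : ∃ S : Set ℕ, RecSet S ∧ S ∉ ω) :
    (∃ S : Set ℕ, RecSet S ∧ S.Finite ∧ S ∉ ω) ∧
    (∃ S : Set ℕ, RecSet S ∧ Sᶜ.Finite ∧ S ∉ ω) := by
  constructor
  · obtain ⟨T, hT, hTω, k, hk⟩ := exists_losing_eventually ω hcomp hlose 0 (Or.inl rfl)
    refine ⟨T, hT, (Set.finite_lt_nat k).subset fun x hx => ?_, hTω⟩
    by_contra hlt
    simpa using (hk x (not_lt.1 hlt)).1 hx
  · obtain ⟨T, hT, hTω, k, hk⟩ := exists_losing_eventually ω hcomp hlose 1 (Or.inr rfl)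
    refine ⟨T, hT, (Set.finite_lt_nat k).subset fun x hx => ?_, hTω⟩
    by_contra hlt
    exact hx ((hk x (not_lt.1 hlt)).2 rfl)
end

section
/- Suppose that ℕ ∈ ω and ∅ ∉ ω. If the simple game ω is δ-computable, then ω is not finitely anonymous. -/
open Nat.Partrec in
/-- Recursion theorem for coalitions: a primitive recursive decision procedure may refer to an
index of the coalition it decides. -/
lemma exists_selfref_charIndex (P : ℕ → ℕ → Prop)
    (hP : PrimrecRel P) : ∃ e, CharIndex e {x | P e x} := by
  classical
  have hg : Primrec₂ fun (c : Code) (x : ℕ) => if P (Encodable.encode c) x then 1 else 0 :=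
    Primrec.ite (hP.comp (Primrec.encode.comp Primrec.fst) Primrec.snd)
      (Primrec.const 1) (Primrec.const 0)
  obtain ⟨c, hc⟩ := Code.fixed_point₂
    (f := fun c => ((fun x => if P (Encodable.encode c) x then 1 else 0 : ℕ → ℕ) : ℕ →. ℕ))
    (Computable.partrec hg.to_comp)
  refine ⟨Encodable.encode c, fun x => ?_⟩
  rw [Denumerable.ofNat_encode, hc]
  rfl

/-- The computation of `c` on `n` is seen to give `v` within `t` steps. -/
abbrev ConvergesBy (c : Nat.Partrec.Code) (v n t : ℕ) : Prop :=
  Nat.Partrec.Code.evaln t c n = some v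

lemma primrecRel_convergesBy (c : Nat.Partrec.Code) (v : ℕ) :
    PrimrecRel (ConvergesBy c v) := by
  have h : Primrec fun p : ℕ × ℕ => Nat.Partrec.Code.evaln p.2 c p.1 :=
    Nat.Partrec.Code.primrec_evaln.comp
      ((Primrec.snd.pair (Primrec.const c)).pair Primrec.fst)
  exact Primrec.eq.comp h (Primrec.const (some v))

lemma convergesBy_iff {c : Nat.Partrec.Code} {v n : ℕ} (h : c.eval n = Part.some v) :
    ∃ s, 0 < s ∧ ∀ t, ConvergesBy c v n t ↔ s ≤ t := by
  classical
  have hex : ∃ s, ConvergesBy c v n s :=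
    Nat.Partrec.Code.evaln_complete.1 (h ▸ Part.mem_some v)
  refine ⟨Nat.find hex, ?_, fun t => ⟨fun ht => Nat.find_min' hex ht, fun ht =>
    Nat.Partrec.Code.evaln_mono ht (Nat.find_spec hex)⟩⟩
  exact lt_of_le_of_lt (Nat.zero_le n) (Nat.Partrec.Code.evaln_bound (Nat.find_spec hex))

lemma not_convergesBy {c : Nat.Partrec.Code} {v n : ℕ} (h : c.eval n ≠ Part.some v) (t : ℕ) :
    ¬ ConvergesBy c v n t :=
  fun ht => h (Part.eq_some_iff.2 (Nat.Partrec.Code.evaln_sound ht))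

lemma exists_initial_segment_winning {ω : Set (Set ℕ)} (huniv : Set.univ ∈ ω)
    (hcomp : DeltaComputable ω) : ∃ s, {x | x < s} ∈ ω ∧ RecSet {x | x < s} := by
  classical
  obtain ⟨f, hf, hω⟩ := hcomp
  obtain ⟨c, rfl⟩ := Nat.Partrec.Code.exists_code.1 hf
  obtain ⟨e, he⟩ := exists_selfref_charIndex (fun e x => ¬ ConvergesBy c 1 e x)
    (primrecRel_convergesBy c 1).not
  have hval := hω e _ he
  by_cases h : c.eval e = Part.some 1
  · obtain ⟨s, -, hs⟩ := convergesBy_iff h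
    have hS : {x | ¬ ConvergesBy c 1 e x} = {x | x < s} := by
      ext x
      simp only [Set.mem_ofPred_eq, hs, not_le]
    rw [hS] at hval he
    refine ⟨s, ?_, e, he⟩
    by_contra hlose
    rw [if_neg hlose, h] at hval
    exact one_ne_zero (Part.some_injective hval)
  · have hS : {x | ¬ ConvergesBy c 1 e x} = Set.univ :=
      Set.eq_univ_of_forall (not_convergesBy h)
    rw [hS, if_pos huniv] at hval
    exact absurd hval h

lemma exists_segment_losing {ω : Set (Set ℕ)} (hempty : ∅ ∉ ω)
    (hcomp : DeltaComputable ω) (k : ℕ) :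
    ∃ m, k ≤ m ∧ {x | m ≤ x ∧ x < m + k} ∉ ω := by
  classical
  obtain ⟨f, hf, hω⟩ := hcomp
  obtain ⟨c, rfl⟩ := Nat.Partrec.Code.exists_code.1 hf
  -- With convergence first seen at stage `s`, this is the segment from `s + k` to `s + 2 * k`;
  -- the shift by `k` keeps it disjoint from the players below `k`.
  have hP : PrimrecRel fun e x =>
      ConvergesBy c 0 e (x - k) ∧ ¬ ConvergesBy c 0 e (x - 2 * k) := by
    have hsub (j : ℕ) : PrimrecRel fun e x => ConvergesBy c 0 e (x - j) :=
      (primrecRel_convergesBy c 0).comp Primrec.fst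
        (Primrec.nat_sub.comp Primrec.snd (Primrec.const j))
    exact PrimrecPred.and (hsub k) (PrimrecPred.not (hsub (2 * k)))
  obtain ⟨e, he⟩ := exists_selfref_charIndex _ hP
  have hval := hω e _ he
  by_cases h : c.eval e = Part.some 0
  · obtain ⟨s, hs0, hs⟩ := convergesBy_iff h
    -- Positivity of `s` makes the truncated subtractions harmless.
    have hS : {x | ConvergesBy c 0 e (x - k) ∧ ¬ ConvergesBy c 0 e (x - 2 * k)} =
        {x | s + k ≤ x ∧ x < s + k + k} := by
      ext x
      simp only [Set.mem_ofPred_eq, hs]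
      omega
    rw [hS] at hval
    refine ⟨s + k, Nat.le_add_left k s, fun hwin => ?_⟩
    rw [if_pos hwin, h] at hval
    exact zero_ne_one (Part.some_injective hval)
  · have hS : {x | ConvergesBy c 0 e (x - k) ∧ ¬ ConvergesBy c 0 e (x - 2 * k)} = ∅ :=
      Set.eq_empty_of_forall_notMem fun x hx => not_convergesBy h _ hx.1
    rw [hS, if_neg hempty] at hval
    exact absurd hval h

/-- Disjoint segments of equal length are exchanged by a finitary permutation. -/
lemma exists_perm_swap_segments {k m : ℕ} (hkm : k ≤ m) :
    ∃ π : Equiv.Perm ℕ, {i : ℕ | π i ≠ i}.Finite ∧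
      π '' {x | x < k} = {x | m ≤ x ∧ x < m + k} := by
  let g : ℕ → ℕ := fun i => if i < k then i + m else if m ≤ i ∧ i < m + k then i - m else i
  have hg : Function.Involutive g := by
    intro i
    simp only [g]
    split_ifs <;> omega
  refine ⟨hg.toPerm, (Set.finite_lt_nat (m + k)).subset fun i hi => ?_, ?_⟩
  · simp only [Function.Involutive.coe_toPerm, Set.mem_ofPred_eq, g] at hi ⊢
    split_ifs at hi <;> omega
  · ext x
    simp only [Function.Involutive.coe_toPerm, Set.mem_image, Set.mem_ofPred_eq]
    constructor
    · rintro ⟨i, hi, rfl⟩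
      simp only [g, if_pos hi]
      omega
    · rintro ⟨h₁, h₂⟩
      refine ⟨x - m, by omega, ?_⟩
      simp only [g]
      split_ifs <;> omega

/-- A δ-computable simple game with `ℕ` winning and `∅` losing is not finitely
anonymous. -/
theorem stmt9 (ω : Set (Set ℕ)) (hgame : ∀ S ∈ ω, RecSet S)
    (huniv : Set.univ ∈ ω) (hempty : ∅ ∉ ω) (hcomp : DeltaComputable ω) :
    ¬ (∀ π : Equiv.Perm ℕ, {i : ℕ | π i ≠ i}.Finite →
        ∀ S : Set ℕ, RecSet S → (S ∈ ω ↔ π '' S ∈ ω)) := by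
  intro hanon
  obtain ⟨k, hwin, hrec⟩ := exists_initial_segment_winning huniv hcomp
  obtain ⟨m, hkm, hlose⟩ := exists_segment_losing hempty hcomp k
  obtain ⟨π, hfin, himage⟩ := exists_perm_swap_segments hkm
  exact hlose (himage ▸ (hanon π hfin _ hrec).1 hwin)
end

section
/- Let ω be a nonweak B-simple game. Then the Nakamura number ν(ω) satisfies ν(ω) ≤ min{#S : S ∈ ω} + 1; equivalently, for every S ∈ ω, ν(ω) ≤ #S + 1. -/
/-!
Since the whole family `ω` has empty intersection, every player `i` of a winning coalition `S` is
missing from some winning coalition `T i`. The family consisting of `S` and the `T i`, `i ∈ S`, has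
empty intersection and at most `#S + 1` members.
-/

/-- The Nakamura number of a (nonweak) simple game: the least cardinality of a
subfamily of winning coalitions with empty intersection. -/
noncomputable def nakamura {α : Type u} (ω : Set (Set α)) : Cardinal.{u} :=
  sInf {c : Cardinal | ∃ ω' ⊆ ω, ⋂₀ ω' = ∅ ∧ c = Cardinal.mk ω'}

/-- Nakamura's lemma: for a nonweak B-simple game, the Nakamura number is at
most the cardinality of any winning coalition plus one. -/
theorem stmt10 {α : Type u} [Nonempty α] (B : Set (Set α))
    (hBuniv : Set.univ ∈ B)
    (hBunion : ∀ S ∈ B, ∀ T ∈ B, S ∪ T ∈ B)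
    (hBinter : ∀ S ∈ B, ∀ T ∈ B, S ∩ T ∈ B)
    (hBcompl : ∀ S ∈ B, Sᶜ ∈ B)
    (ω : Set (Set α)) (hωB : ω ⊆ B) (hempty : ∅ ∉ ω)
    (hnonweak : ω.Nonempty ∧ ⋂₀ ω = ∅) :
    ∀ S ∈ ω, nakamura ω ≤ Cardinal.mk S + 1 := by
  intro S hS
  have h : ∀ i : S, ∃ T ∈ ω, (i : α) ∉ T := by
    intro i
    by_contra! hc
    have hi : (i : α) ∈ ⋂₀ ω := hc
    simp [hnonweak.2] at hi
  choose T hT hiT using h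
  have hsub : insert S (Set.range T) ⊆ ω :=
    Set.insert_subset hS (Set.range_subset_iff.2 hT)
  have hinter : ⋂₀ insert S (Set.range T) = ∅ := by
    refine Set.eq_empty_iff_forall_notMem.2 fun x hx => ?_
    have hxS : x ∈ S := hx S (Set.mem_insert _ _)
    exact hiT ⟨x, hxS⟩ (hx _ (Set.mem_insert_of_mem _ ⟨⟨x, hxS⟩, rfl⟩))
  calc nakamura ω ≤ Cardinal.mk (insert S (Set.range T) : Set (Set α)) :=
        csInf_le' ⟨_, hsub, hinter, rfl⟩
    _ ≤ Cardinal.mk (Set.range T) + 1 := Cardinal.mk_insert_le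
    _ ≤ Cardinal.mk S + 1 := by gcongr; exact Cardinal.mk_range_le
end

section
/- For any integer k ≥ 2, there exists a δ-computable, nonweak simple game ω (on the recursive coalitions of ℕ) with Nakamura number ν(ω) = k. -/
open Classical in
/-- The simple game whose winning coalitions are the recursive sets containing at least `k - 1` of
the players `0, …, k - 1`. -/
def game (k : ℕ) : Set (Set ℕ) :=
  {S | RecSet S ∧ k ≤ ((Finset.range k).filter (· ∈ S)).card + 1}

/-- The coalition of all players below `k` other than `i`. -/
def punctured (k i : ℕ) : Set ℕ := {x | x < k ∧ x ≠ i}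

/-- The sum of the outputs of the `e`-th program on the inputs below `n`, defined when all these
computations halt. For a characteristic index it counts the members below `n`. -/
def countBelow (n e : ℕ) : Part ℕ :=
  Nat.rec (Part.some 0)
    (fun m a => a.bind fun s =>
      ((Denumerable.ofNat Nat.Partrec.Code e).eval m).map fun b => s + b) n

lemma partrec_countBelow (n : ℕ) : Partrec (countBelow n) := by
  induction n with
  | zero => exact (Computable.const 0).partrec
  | succ n ih =>
    refine Partrec.bind ih (Partrec.map ?_ ?_)
    · exact Nat.Partrec.Code.eval_part.comp
        ((Computable.ofNat _).comp Computable.fst) (Computable.const n)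
    · exact (Primrec.nat_add.comp (Primrec.snd.comp Primrec.fst) Primrec.snd).to_comp.to₂

open Classical in
lemma countBelow_eq {e : ℕ} {S : Set ℕ} (h : CharIndex e S) (n : ℕ) :
    countBelow n e = Part.some ((Finset.range n).filter (· ∈ S)).card := by
  induction n with
  | zero => simp [countBelow]
  | succ n ih =>
    have : countBelow (n + 1) e = (countBelow n e).bind fun s =>
        ((Denumerable.ofNat Nat.Partrec.Code e).eval n).map fun b => s + b := rfl
    rw [this, ih, h n, Finset.range_add_one, Finset.filter_insert]
    by_cases hn : n ∈ S <;> simp [hn]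

lemma deltaComputable_game (k : ℕ) : DeltaComputable (game k) := by
  refine ⟨fun e => (countBelow k e).map fun s => if k ≤ s + 1 then 1 else 0, ?_, ?_⟩
  · refine Partrec.nat_iff.1 (Partrec.map (partrec_countBelow k) ?_)
    exact (Primrec.ite (Primrec.nat_le.comp (Primrec.const k)
      (Primrec.succ.comp Primrec.snd)) (Primrec.const 1) (Primrec.const 0)).to_comp.to₂
  · intro e S h
    have hS : RecSet S := ⟨e, h⟩
    simp [countBelow_eq h, game, hS]

lemma recSet_punctured (k i : ℕ) : RecSet (punctured k i) := by
  have hp : Primrec fun x : ℕ => if x < k ∧ x ≠ i then 1 else 0 :=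
    Primrec.ite ((Primrec.nat_lt.comp Primrec.id (Primrec.const k)).and
      (Primrec.eq.comp Primrec.id (Primrec.const i)).not) (Primrec.const 1) (Primrec.const 0)
  obtain ⟨c, hc⟩ := Nat.Partrec.Code.exists_code.1 (Partrec.nat_iff.1 hp.to_comp.partrec)
  refine ⟨Encodable.encode c, fun x => ?_⟩
  rw [Denumerable.ofNat_encode, hc]
  simp only [PFun.coe_val, punctured, Set.mem_ofPred_eq]
  congr

lemma punctured_mem_game {k i : ℕ} (hi : i < k) : punctured k i ∈ game k := by
  classical
  refine ⟨recSet_punctured k i, ?_⟩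
  have : (Finset.range k).filter (· ∈ punctured k i) = (Finset.range k).erase i := by
    ext x
    rw [Finset.mem_filter]
    simp only [punctured, Finset.mem_range, Set.mem_ofPred_eq, Finset.mem_erase]
    tauto
  rw [this, Finset.card_erase_of_mem (Finset.mem_range.2 hi), Finset.card_range]
  omega

lemma sInter_punctured {k : ℕ} (hk : 2 ≤ k) :
    ⋂₀ Set.range (fun i : Fin k => punctured k i) = ∅ := by
  refine Set.eq_empty_iff_forall_notMem.2 fun x hx => ?_
  -- Any one of the coalitions forces `x < k`; then `x` is not in the one that omits it.
  have h0 : x ∈ punctured k 0 := hx _ ⟨⟨0, by omega⟩, rfl⟩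
  exact (hx _ ⟨⟨x, h0.1⟩, rfl⟩ : x ∈ punctured k x).2 rfl

lemma eq_of_notMem_of_mem_game {k : ℕ} {S : Set ℕ} (hS : S ∈ game k) {i j : ℕ}
    (hi : i < k) (hj : j < k) (hiS : i ∉ S) (hjS : j ∉ S) : i = j := by
  classical
  have h := Finset.card_filter_add_card_filter_not (s := Finset.range k) (· ∈ S)
  rw [Finset.card_range] at h
  have h1 : ((Finset.range k).filter (· ∉ S)).card ≤ 1 := by
    have := hS.2
    omega
  exact Finset.card_le_one.1 h1 i (by simp [hi, hiS]) j (by simp [hj, hjS])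

/-- Sending each player below `k` to a coalition of the family that misses it is injective. -/
lemma le_mk_of_sInter_eq_empty {k : ℕ} {ω' : Set (Set ℕ)} (hsub : ω' ⊆ game k)
    (hemp : ⋂₀ ω' = ∅) : (k : Cardinal) ≤ Cardinal.mk ω' := by
  have key : ∀ i : Fin k, ∃ S : ω', (i : ℕ) ∉ (S : Set ℕ) := by
    intro i
    by_contra! h
    have : (i : ℕ) ∈ ⋂₀ ω' := fun S hS => h ⟨S, hS⟩
    simp [hemp] at this
  choose f hf using key
  have hinj : Function.Injective f := fun i j hij =>
    Fin.ext (eq_of_notMem_of_mem_game (hsub (f i).2) i.2 j.2 (hf i) (hij ▸ hf j))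
  simpa using Cardinal.mk_le_of_injective hinj

/-- For every integer k ≥ 2 there is a δ-computable, nonweak simple game with
Nakamura number exactly k. -/
theorem stmt11 (k : ℕ) (hk : 2 ≤ k) :
    ∃ ω : Set (Set ℕ), (∀ S ∈ ω, RecSet S) ∧ DeltaComputable ω ∧
      (ω.Nonempty ∧ ⋂₀ ω = ∅) ∧ nakamura ω = (k : Cardinal) := by
  have hsub : Set.range (fun i : Fin k => punctured k i) ⊆ game k := by
    rintro _ ⟨i, rfl⟩
    exact punctured_mem_game i.2
  refine ⟨game k, fun S hS => hS.1, deltaComputable_game k,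
    ⟨⟨_, punctured_mem_game (i := 0) (by omega)⟩, ?_⟩, le_antisymm ?_ ?_⟩
  · exact Set.subset_eq_empty (Set.sInter_subset_sInter hsub) (sInter_punctured hk)
  · have hle : nakamura (game k) ≤ Cardinal.mk (Set.range fun i : Fin k => punctured k i) :=
      csInf_le' ⟨_, hsub, sInter_punctured hk, rfl⟩
    refine hle.trans ?_
    simpa using Cardinal.mk_range_le (f := fun i : Fin k => punctured k i)
  -- The set of cardinals is nonempty, so its infimum is not the junk value `0`.
  · refine le_csInf ⟨_, _, hsub, sInter_punctured hk, rfl⟩ ?_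
    rintro _ ⟨ω', h, hemp, rfl⟩
    exact le_mk_of_sInter_eq_empty h hemp
end

section
/- Let ω be a δ-computable, nonweak simple game. Then its Nakamura number ν(ω) is finite. -/
/-- A δ-computable game with a winning coalition `S` has a finite winning coalition, found as
a subset of `S` whose program waits for the game to declare it winning. -/
lemma DeltaComputable.exists_finite_mem {ω : Set (Set ℕ)} (hcomp : DeltaComputable ω)
    {S : Set ℕ} (hS : S ∈ ω) (hrec : RecSet S) : ∃ T ∈ ω, T.Finite := by
  classical
  obtain ⟨f, hf, hext⟩ := hcomp
  obtain ⟨cf, rfl⟩ := Nat.Partrec.Code.exists_code.1 hf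
  obtain ⟨s, hs⟩ := hrec
  have hχ : Computable (fun x : ℕ => if x ∈ S then 1 else 0 : ℕ → ℕ) := by
    have h : Partrec (Denumerable.ofNat Nat.Partrec.Code s).eval :=
      Partrec.nat_iff.2 (Nat.Partrec.Code.exists_code.2 ⟨_, rfl⟩)
    exact h.of_eq fun x => by simpa using hs x
  have hev : Computable (fun p : Nat.Partrec.Code × ℕ =>
      Nat.Partrec.Code.evaln p.2 cf (Encodable.encode p.1)) :=
    (Nat.Partrec.Code.primrec_evaln.comp ((Primrec.snd.pair (Primrec.const cf)).pair
      (Primrec.encode.comp Primrec.fst))).to_comp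
  have htest : Computable (fun p : Nat.Partrec.Code × ℕ =>
      decide (Nat.Partrec.Code.evaln p.2 cf (Encodable.encode p.1) = some 1)) :=
    (Primrec.eq (α := Option ℕ)).decide.to_comp.comp hev (Computable.const (some 1))
  have hg : Partrec₂ (fun (c : Nat.Partrec.Code) (x : ℕ) => Part.some
      (cond (decide (Nat.Partrec.Code.evaln x cf (Encodable.encode c) = some 1)) 0
        (if x ∈ S then 1 else 0))) :=
    Computable.cond htest (Computable.const 0) (hχ.comp Computable.snd)
  obtain ⟨c, hc⟩ := Nat.Partrec.Code.fixed_point₂ hg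
  -- `c` evaluates the extended indicator at its own index `e`.
  set e := Encodable.encode c with he
  set T : Set ℕ := {x ∈ S | Nat.Partrec.Code.evaln x cf e ≠ some 1} with hT
  have hidx : CharIndex e T := by
    intro x
    rw [he, Denumerable.ofNat_encode, hc]
    by_cases h1 : Nat.Partrec.Code.evaln x cf e = some 1 <;> by_cases h2 : x ∈ S <;>
      simp [hT, h1, h2]
  have hval := hext e T hidx
  have hTω : T ∈ ω := by
    by_contra hlose
    have hTS : T = S := by
      refine Set.Subset.antisymm (fun x hx => hx.1) fun x hx => ⟨hx, fun h => ?_⟩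
      have := Nat.Partrec.Code.evaln_sound (Option.mem_def.2 h)
      simp [hval, hlose] at this
    exact hlose (hTS ▸ hS)
  refine ⟨T, hTω, ?_⟩
  have h1 : 1 ∈ cf.eval e := by simp [hval, hTω]
  obtain ⟨k, hk⟩ := Nat.Partrec.Code.evaln_complete.1 h1
  refine (Set.finite_Iio k).subset fun x hx => ?_
  by_contra hkx
  exact hx.2 (Nat.Partrec.Code.evaln_mono (not_lt.1 hkx) hk)

/-- A δ-computable, nonweak simple game has a finite Nakamura number. -/
theorem stmt12 (ω : Set (Set ℕ)) (hgame : ∀ S ∈ ω, RecSet S)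
    (hcomp : DeltaComputable ω) (hnonweak : ω.Nonempty ∧ ⋂₀ ω = ∅) :
    nakamura ω < Cardinal.aleph0 := by
  obtain ⟨⟨S, hS⟩, hempty⟩ := hnonweak
  obtain ⟨T, hT, hfin⟩ := hcomp.exists_finite_mem hS (hgame S hS)
  have hmiss : ∀ i : ℕ, ∃ R ∈ ω, i ∉ R := by
    intro i
    have : i ∉ ⋂₀ ω := by simp [hempty]
    simpa using this
  choose R hR hiR using hmiss
  have hfam : (insert T (R '' T)).Finite := (hfin.image R).insert T
  refine lt_of_le_of_lt (csInf_le' ⟨insert T (R '' T), ?_, ?_, rfl⟩) hfam.lt_aleph0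
  · rintro _ (rfl | ⟨i, -, rfl⟩)
    exacts [hT, hR i]
  · refine Set.eq_empty_of_forall_notMem fun i hi => hiR i ?_
    have hiT : i ∈ T := hi T (Set.mem_insert _ _)
    exact hi (R i) (Set.mem_insert_of_mem _ (Set.mem_image_of_mem R hiT))
end

section
/- Let B be a Boolean algebra of subsets of a nonempty set N', and let ω be a B-simple game with ∅ ∉ ω and ω ≠ ∅, and X a set of alternatives with #X ≥ 2. Then the core C(ω, X, p) is nonempty for every B-measurable profile p if and only if X is finite and #X < ν(ω). -/
/-- Acyclicity of a binary relation: no finite cycles, i.e. the transitive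
closure is irreflexive. -/
def Acyclic {X : Type v} (r : X → X → Prop) : Prop :=
  ∀ x, ¬ Relation.TransGen r x x

/-- The dominance relation of a simple game at a profile of preferences:
`x` dominates `y` iff some winning coalition unanimously prefers `x` to `y`. -/
def Dom {N' : Type u} {X : Type v} (ω : Set (Set N')) (p : N' → X → X → Prop)
    (x y : X) : Prop :=
  ∃ S ∈ ω, ∀ i ∈ S, p i x y

/-- The core: the set of undominated alternatives. -/
def Core {N' : Type u} {X : Type v} (ω : Set (Set N')) (p : N' → X → X → Prop) :
    Set X :=
  {x : X | ¬ ∃ y : X, Dom ω p y x}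

open Classical in
/-- The Nakamura number with Nakamura's convention: if `ω` is weak, it is set to
`2 ^ #X`, a cardinal exceeding `#X`. -/
noncomputable def nakamuraConv {α : Type u} (ω : Set (Set α)) (X : Type u) :
    Cardinal.{u} :=
  if ω.Nonempty ∧ ⋂₀ ω = ∅ then nakamura ω else 2 ^ Cardinal.mk X

/-- A finite acyclic relation on a nonempty type has a maximal element. -/
lemma Acyclic.exists_maximal {X : Type*} [Finite X] [Nonempty X] {r : X → X → Prop}
    (h : Acyclic r) : ∃ x, ∀ y, ¬ r y x := by
  have : Std.Irrefl (Relation.TransGen r) := ⟨h⟩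
  have wf := Finite.wellFounded_of_trans_of_irrefl (Relation.TransGen r)
  obtain ⟨x, -, hx⟩ := wf.has_min Set.univ Set.univ_nonempty
  exact ⟨x, fun y hy => hx y trivial (.single hy)⟩

lemma exists_acyclic_unbounded (X : Type*) [Infinite X] :
    ∃ r : X → X → Prop, Acyclic r ∧ ∀ x, ∃ y, r y x := by
  obtain ⟨h, hh⟩ : ∃ h : X → ℕ, Function.Surjective h :=
    ⟨_, Function.invFun_surjective (Infinite.natEmbedding X).injective⟩
  refine ⟨fun y x => h x < h y, fun x hx => ?_, fun x => ?_⟩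
  · have key : ∀ a b, Relation.TransGen (fun y x => h x < h y) a b → h b < h a := by
      intro a b hab
      induction hab with
      | single h => exact h
      | tail _ h ih => exact h.trans ih
    exact lt_irrefl _ (key x x hx)
  · obtain ⟨y, hy⟩ := hh (h x + 1)
    exact ⟨y, by simp [hy]⟩

open scoped Fin.NatCast Fin.CommRing in
/-- A directed cycle through all of `X`, with at least one of its arrows removed, is acyclic. -/
lemma acyclic_cycle_of_missing {X : Type*} {n : ℕ} (e : X ≃ Fin (n + 1)) (P : X → Prop)
    (hP : ∃ x, ¬ P x) : Acyclic (fun a b => e a = e b + 1 ∧ P b) := by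
  intro x hx
  set r : X → X → Prop := fun a b => e a = e b + 1 ∧ P b with hr
  -- The only arrow at a point `a` of a closed walk leads to its predecessor, which is then also on
  -- the walk.
  have step : ∀ a b, Relation.TransGen r a a → e a = e b + 1 →
      P b ∧ Relation.TransGen r b b := by
    intro a b ha hab
    obtain ⟨c, hac, hca⟩ := Relation.TransGen.head'_iff.1 ha
    have hcb : c = b := e.injective (add_right_cancel (hac.1.symm.trans hab))
    subst hcb
    exact ⟨hac.2, Relation.TransGen.tail' hca hac⟩
  have all : ∀ m : ℕ, Relation.TransGen r (e.symm (e x - (m : Fin (n + 1))))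
      (e.symm (e x - (m : Fin (n + 1)))) := by
    intro m
    induction m with
    | zero => simpa using hx
    | succ m ih => exact (step _ _ ih (by simp [sub_add_eq_sub_sub])).2
  obtain ⟨y, hy⟩ := hP
  have h := all (e x - (e y + 1)).val
  rw [Fin.cast_val_eq_self, sub_sub_cancel] at h
  exact hy (step _ y h (by simp)).1

/-- Fewer than `ν(ω)` winning coalitions have a common member; in the weak case, any number do. -/
lemma exists_mem_of_lt_nakamuraConv {N' X : Type u} {ω : Set (Set N')} (hne : ω.Nonempty)
    (hlt : Cardinal.mk X < nakamuraConv ω X) (S : X → Set N') (hS : ∀ x, S x ∈ ω) :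
    ∃ i, ∀ x, i ∈ S x := by
  by_cases hw : ω.Nonempty ∧ ⋂₀ ω = ∅
  · rw [nakamuraConv, if_pos hw] at hlt
    by_contra! hcon
    have hr : ⋂₀ Set.range S = ∅ := by
      ext i
      simpa using hcon i
    have h1 : nakamura ω ≤ Cardinal.mk (Set.range S) :=
      csInf_le' ⟨_, Set.range_subset_iff.2 hS, hr, rfl⟩
    exact absurd (h1.trans Cardinal.mk_range_le) hlt.not_ge
  · have : (⋂₀ ω).Nonempty := Set.nonempty_iff_ne_empty.2 fun h => hw ⟨hne, h⟩
    obtain ⟨i, hi⟩ := this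
    exact ⟨i, fun x => hi _ (hS x)⟩

/-- If `ν(ω) ≤ #X`, then winning coalitions with no common member can be indexed by `X`. -/
lemma exists_family_of_nakamuraConv_le {N' X : Type u} [Nonempty N'] {ω : Set (Set N')}
    (hle : nakamuraConv ω X ≤ Cardinal.mk X) :
    ∃ S : X → Set N', (∀ x, S x ∈ ω) ∧ ∀ i, ∃ x, i ∉ S x := by
  by_cases hw : ω.Nonempty ∧ ⋂₀ ω = ∅
  · rw [nakamuraConv, if_pos hw] at hle
    obtain ⟨ω', hsub, hinter, hcard⟩ :=
      csInf_mem (s := {c : Cardinal | ∃ ω' ⊆ ω, ⋂₀ ω' = ∅ ∧ c = Cardinal.mk ω'})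
        ⟨_, ω, subset_rfl, hw.2, rfl⟩
    have hcard' : Cardinal.mk ω' ≤ Cardinal.mk X := hcard.symm.trans_le hle
    obtain ⟨g⟩ := Cardinal.le_def _ _ |>.1 hcard'
    -- The empty family has intersection `univ`, which is nonempty.
    have hne' : Nonempty ω' := by
      rw [Set.nonempty_coe_sort, Set.nonempty_iff_ne_empty]
      rintro rfl
      simp at hinter
    refine ⟨fun x => (Function.invFun g x : ω'), fun x => hsub (Subtype.coe_prop _), fun i => ?_⟩
    have hi : i ∉ ⋂₀ ω' := by simp [hinter]
    simp only [Set.mem_sInter, not_forall] at hi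
    obtain ⟨T, hT, hiT⟩ := hi
    refine ⟨g ⟨T, hT⟩, ?_⟩
    simpa only [Function.leftInverse_invFun g.injective _] using hiT
  · rw [nakamuraConv, if_neg hw] at hle
    exact absurd (Cardinal.cantor _) hle.not_gt

/-- Nakamura's theorem for an arbitrary Boolean algebra `B` of coalitions: the
core of the `B`-simple game `ω` with preferences is nonempty for every
`B`-measurable profile of acyclic preferences iff `X` is finite and
`#X < ν(ω)`. -/
theorem stmt13 {N' X : Type u} [Nonempty N'] (B : Set (Set N'))
    (hBuniv : Set.univ ∈ B)
    (hBunion : ∀ S ∈ B, ∀ T ∈ B, S ∪ T ∈ B)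
    (hBinter : ∀ S ∈ B, ∀ T ∈ B, S ∩ T ∈ B)
    (hBcompl : ∀ S ∈ B, Sᶜ ∈ B)
    (ω : Set (Set N')) (hωB : ω ⊆ B) (hempty : ∅ ∉ ω) (hne : ω.Nonempty)
    (hX : 2 ≤ Cardinal.mk X) :
    (∀ p : N' → X → X → Prop,
        (∀ i, Acyclic (p i)) →
        (∀ x y : X, {i : N' | p i x y} ∈ B) →
        (Core ω p).Nonempty)
    ↔ (Finite X ∧ Cardinal.mk X < nakamuraConv ω X) := by
  have hB0 : ∅ ∈ B := by simpa using hBcompl _ hBuniv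
  have hXne : Nonempty X := by
    rw [← Cardinal.mk_ne_zero_iff]
    rintro h
    simp [h] at hX
  constructor
  · intro H
    have hfin : Finite X := by
      by_contra hinf
      rw [not_finite_iff_infinite] at hinf
      obtain ⟨r, hr, hub⟩ := exists_acyclic_unbounded X
      obtain ⟨x, hx⟩ := H (fun _ => r) (fun _ => hr) fun x y => by
        by_cases h : r x y <;> simp [h, hBuniv, hB0]
      obtain ⟨y, hy⟩ := hub x
      obtain ⟨S, hS⟩ := hne
      exact hx ⟨y, S, hS, fun _ _ => hy⟩
    refine ⟨hfin, lt_of_not_ge fun hle => ?_⟩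
    obtain ⟨S, hS, hmiss⟩ := exists_family_of_nakamuraConv_le hle
    obtain ⟨k, ⟨e⟩⟩ := Finite.exists_equiv_fin X
    obtain ⟨n, rfl⟩ : ∃ n, k = n + 1 :=
      Nat.exists_eq_succ_of_ne_zero (by rintro rfl; exact (e hXne.some).elim0)
    obtain ⟨x, hx⟩ := H (fun i a b => e a = e b + 1 ∧ i ∈ S b)
      (fun i => acyclic_cycle_of_missing e _ (hmiss i)) fun a b => by
        by_cases h : e a = e b + 1
        · simpa [h] using hωB (hS b)
        · simpa [h] using hB0
    exact hx ⟨e.symm (e x + 1), S x, hS x, fun i hi => ⟨by simp, hi⟩⟩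
  · rintro ⟨hfin, hlt⟩ p hp -
    by_contra hcore
    have hdom : ∀ x, ∃ y, Dom ω p y x := by
      intro x
      by_contra h
      exact hcore ⟨x, h⟩
    choose f S hS hpref using hdom
    obtain ⟨i, hi⟩ := exists_mem_of_lt_nakamuraConv hne hlt S hS
    obtain ⟨x, hx⟩ := (hp i).exists_maximal
    exact hx _ (hpref x i (hi x))
end

section
/- Let ω be a nonweak simple game with ∅ ∉ ω, and suppose ω is δ-computable. Then the Nakamura number ν(ω) is finite, and for any set X of alternatives with #X ≥ 2, the dominance relation ≻_ω^p is acyclic for every REC-measurable profile p if and only if #X < ν(ω). -/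
open Nat.Partrec in
/-- A δ-computable game with a winning coalition has a finite one. -/
lemma exists_finite_winning (ω : Set (Set ℕ)) (hgame : ∀ S ∈ ω, RecSet S)
    (hne : ω.Nonempty) (hcomp : DeltaComputable ω) : ∃ F ∈ ω, F.Finite := by
  classical
  obtain ⟨S, hS⟩ := hne
  obtain ⟨e, he⟩ := hgame S hS
  obtain ⟨f, hf, hfω⟩ := hcomp
  obtain ⟨cf, rfl⟩ := Code.exists_code.1 hf
  let acc : Code → ℕ → Bool := fun c x => decide (Code.evaln x cf (Encodable.encode c) = some 1)
  have hacc : Computable₂ acc := by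
    have h1 : Primrec (fun q : Code × ℕ => Code.evaln q.2 cf (Encodable.encode q.1)) :=
      Code.primrec_evaln.comp
        (Primrec.pair (Primrec.pair Primrec.snd (Primrec.const cf))
          (Primrec.encode.comp Primrec.fst))
    have h2 : PrimrecPred (fun q : Code × ℕ =>
        Code.evaln q.2 cf (Encodable.encode q.1) = some 1) :=
      Primrec.eq.comp h1 (Primrec.const (some 1))
    exact h2.decide.to_comp
  have hg : Partrec₂ (fun (c : Code) (x : ℕ) =>
      bif acc c x then Part.some 0 else (Denumerable.ofNat Code e).eval x) := by
    refine Partrec.cond hacc (Computable.const 0).partrec ?_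
    exact (Code.eval_part.comp (Computable.const _) Computable.snd)
  obtain ⟨c, hc⟩ := Code.fixed_point₂ hg
  have hchar : CharIndex (Encodable.encode c) {x | x ∈ S ∧ acc c x = false} := by
    intro x
    rw [Denumerable.ofNat_encode, hc]
    cases h : acc c x
    · simp only [cond_false, he x, Set.mem_ofPred_eq, h, and_true]
    · simp [h]
  by_cases hex : ∃ t, acc c t = true
  · obtain ⟨t, ht⟩ := hex
    have ht' : Code.evaln t cf (Encodable.encode c) = some 1 := of_decide_eq_true ht
    refine ⟨_, ?_, (Set.finite_lt_nat t).subset (t := {x | x ∈ S ∧ acc c x = false}) ?_⟩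
    · by_contra hlose
      have h1 : (1 : ℕ) ∈ cf.eval (Encodable.encode c) := Code.evaln_sound ht'
      rw [hfω _ _ hchar, if_neg hlose] at h1
      simp at h1
    · rintro x ⟨-, hx⟩
      by_contra hlt
      have : acc c x = true := decide_eq_true (Code.evaln_mono (not_lt.1 hlt) ht')
      simp [this] at hx
  · exfalso
    have hall : ∀ t, acc c t = false := fun t => by
      cases h : acc c t
      · rfl
      · exact absurd ⟨t, h⟩ hex
    have hSeq : {x | x ∈ S ∧ acc c x = false} = S := by ext x; simp [hall]
    rw [hSeq] at hchar
    have h1 : (1 : ℕ) ∈ cf.eval (Encodable.encode c) := by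
      rw [hfω _ _ hchar, if_pos hS]; simp
    obtain ⟨k, hk⟩ := Code.evaln_complete.1 h1
    have : acc c k = true := decide_eq_true hk
    simp [hall] at this

lemma nakamura_le {α : Type*} {ω ω' : Set (Set α)} (h : ω' ⊆ ω) (h0 : ⋂₀ ω' = ∅) :
    nakamura ω ≤ Cardinal.mk ω' :=
  csInf_le' ⟨ω', h, h0, rfl⟩

lemma nakamura_attained {α : Type*} {ω : Set (Set α)} (h : ⋂₀ ω = ∅) :
    ∃ ω' ⊆ ω, ⋂₀ ω' = ∅ ∧ nakamura ω = Cardinal.mk ω' :=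
  csInf_mem (s := {c : Cardinal | ∃ ω' ⊆ ω, ⋂₀ ω' = ∅ ∧ c = Cardinal.mk ω'})
    ⟨_, ω, subset_rfl, h, rfl⟩

lemma nakamura_lt_aleph0 {α : Type*} {ω : Set (Set α)} (h : ⋂₀ ω = ∅) {F : Set α}
    (hF : F ∈ ω) (hfin : F.Finite) : nakamura ω < Cardinal.aleph0 := by
  have hex : ∀ i : α, ∃ S ∈ ω, i ∉ S := by
    intro i
    by_contra! hi
    have : i ∈ ⋂₀ ω := hi
    simp [h] at this
  choose T hT hiT using hex
  have hsub : insert F (T '' F) ⊆ ω := by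
    rintro _ (rfl | ⟨i, -, rfl⟩)
    exacts [hF, hT i]
  refine (nakamura_le hsub ?_).trans_lt ((hfin.image T).insert F).lt_aleph0
  refine Set.eq_empty_of_forall_notMem fun i hi => hiT i ?_
  exact hi _ (Or.inr ⟨i, hi F (Or.inl rfl), rfl⟩)

lemma recSet_empty : RecSet ∅ := by
  refine ⟨Encodable.encode Nat.Partrec.Code.zero, fun x => ?_⟩
  rw [Denumerable.ofNat_encode]
  simp [Nat.Partrec.Code.eval]
  rfl

/-- With fewer (finitely many) alternatives than the Nakamura number, dominance is acyclic. -/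
lemma acyclic_dom {α X : Type} [Finite X] {ω : Set (Set α)} (hX : Cardinal.mk X < nakamura ω)
    (p : α → X → X → Prop) (hp : ∀ i, Acyclic (p i)) : Acyclic (Dom ω p) := by
  intro x hx
  -- `C` is the strongly connected component of `x` under dominance.
  let C : Set X := {y | Relation.TransGen (Dom ω p) x y ∧ Relation.TransGen (Dom ω p) y x}
  have hnext : ∀ y : C, ∃ z ∈ C, Dom ω p y z := by
    rintro ⟨y, hxy, hyx⟩
    obtain ⟨z, hyz, hzx⟩ := Relation.TransGen.head'_iff.1 hyx
    refine ⟨z, ⟨hxy.tail hyz, ?_⟩, hyz⟩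
    rcases Relation.reflTransGen_iff_eq_or_transGen.1 hzx with rfl | h
    exacts [hx, h]
  choose next hC S hS hpS using hnext
  have hsub : Set.range S ⊆ ω := by rintro _ ⟨y, rfl⟩; exact hS y
  have hcap : (⋂₀ Set.range S).Nonempty := by
    by_contra hemp
    refine (nakamura_le hsub (Set.not_nonempty_iff_eq_empty.1 hemp)).not_gt (lt_of_le_of_lt ?_ hX)
    exact Cardinal.mk_range_le.trans (Cardinal.mk_set_le C)
  obtain ⟨i, hi⟩ := hcap
  let r : X → X → Prop := fun a b => Relation.TransGen (p i) b a
  have : IsTrans X r := ⟨fun _ _ _ hab hbc => hbc.trans hab⟩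
  have : Std.Irrefl r := ⟨fun a => hp i a⟩
  obtain ⟨m, hm, hmax⟩ := (Finite.wellFounded_of_trans_of_irrefl r).has_min C ⟨x, hx, hx⟩
  exact hmax _ (hC ⟨m, hm⟩) (.single (hpS ⟨m, hm⟩ i (hi _ ⟨_, rfl⟩)))

/-- The preference that follows a cycle of distinct alternatives along the steps in `A` is
acyclic as soon as one step is missing. -/
lemma acyclic_cycle {X : Type} {n : ℕ} (f : Fin (n + 1) → X) (hf : f.Injective)
    (A : Fin (n + 1) → Prop) (j₀ : Fin (n + 1)) (hj₀ : ¬ A j₀) :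
    Acyclic (fun x y => ∃ j, f j = x ∧ f (j + 1) = y ∧ A j) := by
  have hstep : ∀ j, A j → j - (j₀ + 1) < j + 1 - (j₀ + 1) := by
    intro j hj
    have h : j + 1 - (j₀ + 1) = j - (j₀ + 1) + 1 := by abel
    rw [h, Fin.lt_add_one_iff, Fin.lt_last_iff_ne_last]
    intro hl
    -- `Fin.last n + 1 = 0`, so position `n` after the gap is the gap itself.
    have h0 : j - (j₀ + 1) + 1 = 0 := by rw [hl, Fin.last_add_one]
    have : j = j₀ := by rw [← sub_eq_zero, ← h0]; abel
    exact hj₀ (this ▸ hj)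
  have key : ∀ x y, Relation.TransGen (fun x y => ∃ j, f j = x ∧ f (j + 1) = y ∧ A j) x y →
      ∃ a b, f a = x ∧ f b = y ∧ a - (j₀ + 1) < b - (j₀ + 1) := by
    intro x y h
    induction h with
    | single h =>
      obtain ⟨j, rfl, rfl, hj⟩ := h
      exact ⟨j, j + 1, rfl, rfl, hstep j hj⟩
    | tail _ h ih =>
      obtain ⟨j, h1, rfl, hj⟩ := h
      obtain ⟨a, b, rfl, hb, hab⟩ := ih
      obtain rfl := hf (hb.trans h1.symm)
      exact ⟨a, b + 1, rfl, rfl, hab.trans (hstep b hj)⟩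
  intro x hx
  obtain ⟨a, b, ha, hb, hab⟩ := key x x hx
  obtain rfl := hf (ha.trans hb.symm)
  exact lt_irrefl _ hab

/-- With at least `ν(ω)` alternatives (and `ν(ω)` finite), some REC-measurable profile of acyclic
preferences has a dominance cycle. -/
lemma exists_cyclic_profile {X : Type} {ω : Set (Set ℕ)} (hgame : ∀ S ∈ ω, RecSet S)
    (h : ⋂₀ ω = ∅) (hfin : nakamura ω < Cardinal.aleph0) (hX : nakamura ω ≤ Cardinal.mk X) :
    ∃ p : ℕ → X → X → Prop, (∀ i, Acyclic (p i)) ∧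
      (∀ x y : X, RecSet {i : ℕ | p i x y}) ∧ ¬ Acyclic (Dom ω p) := by
  obtain ⟨ω', hsub, hcap, hcard⟩ := nakamura_attained h
  rw [hcard] at hfin hX
  obtain ⟨g⟩ := hX
  have : Finite ω' := Cardinal.lt_aleph0_iff_finite.1 hfin
  have : Nonempty ω' := by
    by_contra hne
    rw [Set.nonempty_coe_sort, Set.not_nonempty_iff_eq_empty] at hne
    rw [hne, Set.sInter_empty] at hcap
    exact Set.univ_nonempty.ne_empty hcap
  obtain ⟨k, ⟨σ⟩⟩ := Finite.exists_equiv_fin ω'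
  obtain _ | n := k
  · exact (σ (Classical.arbitrary ω')).elim0
  let S : Fin (n + 1) → Set ℕ := fun j => (σ.symm j : Set ℕ)
  let f : Fin (n + 1) → X := fun j => g (σ.symm j)
  have hf : f.Injective := g.injective.comp σ.symm.injective
  have hS : ∀ j, S j ∈ ω := fun j => hsub (σ.symm j).2
  refine ⟨fun i x y => ∃ j, f j = x ∧ f (j + 1) = y ∧ i ∈ S j, fun i => ?_, fun x y => ?_, ?_⟩
  · have : ∃ j, i ∉ S j := by
      by_contra! hall
      have hi : i ∈ ⋂₀ ω' := fun T hT => by simpa [S] using hall (σ ⟨T, hT⟩)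
      simp [hcap] at hi
    obtain ⟨j₀, hj₀⟩ := this
    exact acyclic_cycle f hf (fun j => i ∈ S j) j₀ hj₀
  · by_cases hj : ∃ j, f j = x ∧ f (j + 1) = y
    · obtain ⟨j, rfl, rfl⟩ := hj
      convert hgame _ (hS j) using 1
      ext i
      constructor
      · rintro ⟨j', h1, -, h3⟩
        rwa [← hf h1]
      · exact fun hi => ⟨j, rfl, rfl, hi⟩
    · convert recSet_empty using 1
      refine Set.eq_empty_of_forall_notMem ?_
      rintro i ⟨j, h1, h2, -⟩
      exact hj ⟨j, h1, h2⟩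
  · intro hac
    have hdom : ∀ j, Dom ω (fun i x y => ∃ j, f j = x ∧ f (j + 1) = y ∧ i ∈ S j)
        (f j) (f (j + 1)) := fun j => ⟨S j, hS j, fun i hi => ⟨j, rfl, rfl, hi⟩⟩
    have hreach : ∀ j, Relation.TransGen
        (Dom ω (fun i x y => ∃ j, f j = x ∧ f (j + 1) = y ∧ i ∈ S j)) (f 0) (f (j + 1)) := by
      intro j
      induction j using Fin.induction with
      | zero => exact .single (hdom 0)
      | succ j ih =>
        refine .tail ?_ (hdom j.succ)
        rwa [← Fin.coeSucc_eq_succ]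
    have := hreach (Fin.last n)
    rw [Fin.last_add_one] at this
    exact hac _ this

/-- For a δ-computable, nonweak simple game `ω` with `∅ ∉ ω`: the Nakamura
number is finite, and for every set `X` of alternatives with `#X ≥ 2`, the
dominance relation is acyclic for every REC-measurable profile of acyclic
preferences iff `#X < ν(ω)`. -/
theorem stmt16 (ω : Set (Set ℕ)) (hgame : ∀ S ∈ ω, RecSet S)
    (hempty : ∅ ∉ ω) (hnonweak : ω.Nonempty ∧ ⋂₀ ω = ∅)
    (hcomp : DeltaComputable ω) :
    nakamura ω < Cardinal.aleph0 ∧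
      ∀ X : Type, 2 ≤ Cardinal.mk X →
        ((∀ p : ℕ → X → X → Prop,
            (∀ i, Acyclic (p i)) →
            (∀ x y : X, RecSet {i : ℕ | p i x y}) →
            Acyclic (Dom ω p))
          ↔ Cardinal.mk X < nakamura ω) := by
  have hfin : nakamura ω < Cardinal.aleph0 := by
    obtain ⟨F, hF, hFfin⟩ := exists_finite_winning ω hgame hnonweak.1 hcomp
    exact nakamura_lt_aleph0 hnonweak.2 hF hFfin
  refine ⟨hfin, fun X _ => ⟨fun hall => ?_, fun hX p hp _ => ?_⟩⟩
  · by_contra hle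
    obtain ⟨p, hp, hrec, hcyc⟩ :=
      exists_cyclic_profile hgame hnonweak.2 hfin (not_lt.1 hle)
    exact hcyc (hall p hp hrec)
  · have : Finite X := Cardinal.lt_aleph0_iff_finite.1 (hX.trans hfin)
    exact acyclic_dom hX p hp
end

section
/- Let ω be a nonweak simple game with ∅ ∉ ω. If ω is a prefilter, then the dominance relation ≻_ω^p is acyclic for every REC-measurable profile p, regardless of the cardinality of the set X of alternatives. -/
/-- `ω` is a prefilter: monotonic (within recursive coalitions), contains `ℕ`,
misses `∅`, and every finite subfamily of winning coalitions has nonempty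
intersection. -/
def Prefilter (ω : Set (Set ℕ)) : Prop :=
  (∀ S ∈ ω, ∀ T : Set ℕ, RecSet T → S ⊆ T → T ∈ ω) ∧
  Set.univ ∈ ω ∧ ∅ ∉ ω ∧
  ∀ ω' ⊆ ω, ω'.Finite → ⋂₀ ω' ≠ ∅

/-- A chain of dominance steps is carried by finitely many winning coalitions:
every player common to all of them holds the same chain of preferences. -/
theorem exists_finite_of_transGen_dom {X : Type*} {ω : Set (Set ℕ)} {p : ℕ → X → X → Prop}
    {x y : X} (h : Relation.TransGen (Dom ω p) x y) :
    ∃ ω' ⊆ ω, ω'.Finite ∧ ∀ i ∈ ⋂₀ ω', Relation.TransGen (p i) x y := by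
  induction h with
  | single h =>
    obtain ⟨S, hS, hp⟩ := h
    exact ⟨{S}, by simpa using hS, Set.finite_singleton S,
      fun i hi => .single (hp i (hi S rfl))⟩
  | tail _ h ih =>
    obtain ⟨S, hS, hp⟩ := h
    obtain ⟨ω', hsub, hfin, hω'⟩ := ih
    refine ⟨insert S ω', Set.insert_subset hS hsub, hfin.insert S, fun i hi => ?_⟩
    rw [Set.sInter_insert] at hi
    exact .tail (hω' i hi.2) (hp i hi.1)

/-- If a nonweak simple game `ω` with `∅ ∉ ω` is a prefilter, then its
dominance relation is acyclic for every REC-measurable profile of acyclic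
preferences, regardless of the cardinality of the set of alternatives. -/
theorem stmt17 (ω : Set (Set ℕ)) (hgame : ∀ S ∈ ω, RecSet S)
    (hempty : ∅ ∉ ω) (hnonweak : ω.Nonempty ∧ ⋂₀ ω = ∅)
    (hpre : Prefilter ω) :
    ∀ (X : Type) (p : ℕ → X → X → Prop),
      (∀ i, Acyclic (p i)) →
      (∀ x y : X, RecSet {i : ℕ | p i x y}) →
      Acyclic (Dom ω p) := by
  intro X p hacyc _ x hx
  obtain ⟨ω', hsub, hfin, hω'⟩ := exists_finite_of_transGen_dom hx
  obtain ⟨i, hi⟩ := Set.nonempty_iff_ne_empty.mpr (hpre.2.2.2 ω' hsub hfin)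
  exact hacyc i x (hω' i hi)
end

section
/- Let A = ℕ∖{0} and define the simple game ω on the recursive coalitions of ℕ by: S ∈ ω if and only if S = A, or (0 ∈ S and S ≠ {0}). Then ω is monotonic, proper, strong, not weak (indeed some finite family of winning coalitions has empty intersection), has a finite winning coalition and a cofinite losing coalition, and is not δ-computable. -/
/-- The game of Section 6.1: a coalition is winning iff it equals
`A = ℕ ∖ {0}`, or it contains `0` and is not `{0}`. -/
def gameA : Set (Set ℕ) :=
  {S : Set ℕ | RecSet S ∧ (S = ({0}ᶜ : Set ℕ) ∨ (0 ∈ S ∧ S ≠ ({0} : Set ℕ)))}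

open Nat.Partrec (Code)

open Classical in
lemma recSet_of_computable {S : Set ℕ} (f : ℕ → ℕ) (hf : Computable f)
    (h : ∀ x, f x = if x ∈ S then 1 else 0) : RecSet S := by
  obtain ⟨c, hc⟩ := Code.exists_code.1 (Partrec.nat_iff.1 hf.partrec)
  refine ⟨Encodable.encode c, fun x => ?_⟩
  rw [Denumerable.ofNat_encode, hc, ← h x]
  rfl

lemma RecSet.compl {S : Set ℕ} (h : RecSet S) : RecSet Sᶜ := by
  classical
  obtain ⟨e, he⟩ := h
  have h1 : Computable fun x : ℕ => if x ∈ S then 1 else 0 := by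
    have h2 : Partrec (Denumerable.ofNat Code e).eval :=
      Partrec.nat_iff.2 (Code.exists_code.2 ⟨_, rfl⟩)
    exact h2.of_eq fun x => he x
  refine recSet_of_computable (fun x => 1 - if x ∈ S then 1 else 0)
    ((Primrec.nat_sub.to_comp).comp (Computable.const 1) h1) fun x => ?_
  by_cases hx : x ∈ S <;> simp [hx]

lemma recSet_pair (a b : ℕ) : RecSet {a, b} := by
  classical
  have h : Primrec fun x : ℕ => if x = a ∨ x = b then 1 else 0 :=
    Primrec.ite
      ((Primrec.eq.comp Primrec.id (Primrec.const a)).or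
        (Primrec.eq.comp Primrec.id (Primrec.const b)))
      (Primrec.const 1) (Primrec.const 0)
  exact recSet_of_computable _ h.to_comp fun x => by simp

lemma recSet_zero : RecSet {0} := by
  simpa using recSet_pair 0 0

lemma compl_zero_mem_gameA : ({0}ᶜ : Set ℕ) ∈ gameA :=
  ⟨recSet_zero.compl, Or.inl rfl⟩

lemma pair_mem_gameA {n : ℕ} (hn : n ≠ 0) : ({0, n} : Set ℕ) ∈ gameA := by
  refine ⟨recSet_pair 0 n, Or.inr ⟨by simp, fun h => hn ?_⟩⟩
  have : n ∈ ({0, n} : Set ℕ) := by simp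
  rwa [h] at this

/-- The self-referential code of the diagonal argument: it outputs `1` at `0`, and elsewhere it
tests whether `d`, run on the code's own index with step bound `x`, outputs `0`. -/
lemma exists_diagonal_code (d : Code) : ∃ c : Code, ∀ x : ℕ, c.eval x =
    Part.some (if x = 0 ∨ Code.evaln x d (Encodable.encode c) = some 0 then 1 else 0) := by
  have h : Computable fun p : Code × ℕ =>
      if p.2 = 0 ∨ Code.evaln p.2 d (Encodable.encode p.1) = some 0 then 1 else 0 := by
    refine (Primrec.ite (PrimrecPred.or ?_ ?_) (Primrec.const 1) (Primrec.const 0)).to_comp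
    · exact Primrec.eq.comp Primrec.snd (Primrec.const 0)
    · exact Primrec.eq.comp
        (Code.primrec_evaln.comp
          ((Primrec.snd.pair (Primrec.const d)).pair (Primrec.encode.comp Primrec.fst)))
        (Primrec.const (some 0))
  obtain ⟨c, hc⟩ := Code.fixed_point₂ (f := fun c x => Part.some
    (if x = 0 ∨ Code.evaln x d (Encodable.encode c) = some 0 then 1 else 0)) h.partrec
  exact ⟨c, fun x => by rw [hc]⟩

lemma not_deltaComputable_gameA : ¬ DeltaComputable gameA := by
  classical
  rintro ⟨f, hf, hfe⟩
  obtain ⟨d, rfl⟩ := Code.exists_code.1 hf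
  obtain ⟨c, hc⟩ := exists_diagonal_code d
  let S : Set ℕ := {x | x = 0 ∨ Code.evaln x d (Encodable.encode c) = some 0}
  have hS : CharIndex (Encodable.encode c) S := fun x => by
    rw [Denumerable.ofNat_encode, hc]
    congr
  have hd := hfe _ S hS
  by_cases hw : S ∈ gameA
  · -- `d` outputs `1`, so no step bound yields the output `0`, and `S = {0}`.
    have hS0 : S = {0} := by
      ext x
      simp only [S, Set.mem_ofPred_eq, Set.mem_singleton_iff, or_iff_left_iff_imp]
      intro hx
      have := Code.evaln_sound (Option.mem_def.2 hx)
      rw [hd, if_pos hw] at this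
      simp at this
    rcases hw.2 with h | h
    · rw [hS0] at h
      have : (0 : ℕ) ∈ ({0}ᶜ : Set ℕ) := h ▸ rfl
      exact this rfl
    · exact h.2 hS0
  · -- `d` outputs `0` within some step bound `k`, necessarily positive, so `k ∈ S`.
    have h0 : 0 ∈ d.eval (Encodable.encode c) := by
      rw [hd, if_neg hw]
      simp
    obtain ⟨k, hk⟩ := Code.evaln_complete.1 h0
    refine hw ⟨⟨_, hS⟩, Or.inr ⟨Or.inl rfl, fun h => ?_⟩⟩
    have hkS : k ∈ S := Or.inr hk
    rw [h, Set.mem_singleton_iff] at hkS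
    have := Code.evaln_bound hk
    omega

/-- The game `gameA` is monotonic, proper, strong, not weak (indeed some finite
family of winning coalitions has empty intersection), has a finite winning
coalition and a cofinite losing coalition, and is not δ-computable. -/
theorem stmt18 :
    (∀ S ∈ gameA, ∀ T : Set ℕ, RecSet T → S ⊆ T → T ∈ gameA) ∧
    (∀ S ∈ gameA, Sᶜ ∉ gameA) ∧
    (∀ S : Set ℕ, RecSet S → S ∉ gameA → Sᶜ ∈ gameA) ∧
    ¬ (gameA = ∅ ∨ ⋂₀ gameA ≠ ∅) ∧
    (∃ ω' ⊆ gameA, ω'.Finite ∧ ⋂₀ ω' = ∅) ∧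
    (∃ S ∈ gameA, S.Finite) ∧
    (∃ S : Set ℕ, RecSet S ∧ Sᶜ.Finite ∧ S ∉ gameA) ∧
    ¬ DeltaComputable gameA := by
  have hinter : ⋂₀ ({{0}ᶜ, {0, 1}, {0, 2}} : Set (Set ℕ)) = ∅ := by
    ext x
    simp only [Set.sInter_insert, Set.sInter_singleton, Set.mem_inter_iff, Set.mem_compl_iff,
      Set.mem_singleton_iff, Set.mem_insert_iff, Set.mem_empty_iff_false, iff_false]
    omega
  have hsub : ({{0}ᶜ, {0, 1}, {0, 2}} : Set (Set ℕ)) ⊆ gameA := by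
    rintro S (rfl | rfl | rfl)
    exacts [compl_zero_mem_gameA, pair_mem_gameA one_ne_zero, pair_mem_gameA two_ne_zero]
  refine ⟨?_, ?_, ?_, ?_, ⟨_, hsub, Set.toFinite _, hinter⟩,
    ⟨_, pair_mem_gameA one_ne_zero, Set.toFinite _⟩, ?_, not_deltaComputable_gameA⟩
  · rintro S ⟨-, hS⟩ T hT hST
    refine ⟨hT, ?_⟩
    rcases hS with rfl | ⟨h0, hne⟩
    · by_cases h0 : 0 ∈ T
      · refine Or.inr ⟨h0, ?_⟩
        rintro rfl
        have : (1 : ℕ) ∈ ({0} : Set ℕ) := hST (by simp)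
        simp at this
      · exact Or.inl (subset_antisymm (by simpa using h0) hST)
    · refine Or.inr ⟨hST h0, ?_⟩
      rintro rfl
      exact hne (subset_antisymm hST (by simpa using h0))
  · rintro S ⟨-, rfl | ⟨h0, hne⟩⟩ ⟨-, h | h⟩
    · rw [compl_compl] at h
      have : (0 : ℕ) ∈ ({0}ᶜ : Set ℕ) := h ▸ rfl
      exact this rfl
    · exact h.2 (compl_compl _)
    · exact hne (compl_injective h)
    · exact h.1 h0
  · intro S hS hl
    refine ⟨hS.compl, ?_⟩
    by_cases h0 : 0 ∈ S
    · have : S = {0} := by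
        by_contra hne
        exact hl ⟨hS, Or.inr ⟨h0, hne⟩⟩
      exact Or.inl (by rw [this])
    · refine Or.inr ⟨h0, fun h => hl ⟨hS, Or.inl ?_⟩⟩
      rw [← h, compl_compl]
  · rintro (h | h)
    · exact (h ▸ compl_zero_mem_gameA : ({0}ᶜ : Set ℕ) ∈ (∅ : Set (Set ℕ)))
    · exact h (Set.subset_empty_iff.1 (hinter ▸ Set.sInter_subset_sInter hsub))
  · refine ⟨{0, 1}ᶜ, (recSet_pair 0 1).compl, by rw [compl_compl]; exact Set.toFinite _, ?_⟩
    rintro ⟨-, h | h⟩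
    · have h1 : (1 : ℕ) ∈ ({0} : Set ℕ) := compl_injective h ▸ (by simp : 1 ∈ ({0, 1} : Set ℕ))
      simp at h1
    · exact h.1 (by simp)
end

section
/- There exists a δ-computable simple game that has no finite carrier. -/
open Nat.Partrec (Code)

open Classical in
/-- The pair `(n, s)` coded by `k` is a success for `S`: the diagonal computation of the `n`-th
partial recursive function on `n` halts within `s` steps with value the characteristic function
of `S` at `n`. -/
def Hit (S : Set ℕ) (k : ℕ) : Prop :=
  Code.evaln k.unpair.2 (Denumerable.ofNat Code k.unpair.1) k.unpair.1 =
    some (if k.unpair.1 ∈ S then 1 else 0)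

/-- `k` codes the first success for `S`. -/
def FirstHit (S : Set ℕ) (k : ℕ) : Prop := Hit S k ∧ ∀ j < k, ¬ Hit S j

/-- The game in which a recursive coalition `S` wins iff `k + 1 ∈ S`, where `k` is the first
success for `S`. -/
def diagGame : Set (Set ℕ) := {S | RecSet S ∧ ∃ k, FirstHit S k ∧ k + 1 ∈ S}

theorem FirstHit.unique {S : Set ℕ} {k l : ℕ} (hk : FirstHit S k) (hl : FirstHit S l) : k = l := by
  rcases lt_trichotomy k l with h | h | h
  · exact absurd hk.1 (hl.2 k h)
  · exact h
  · exact absurd hl.1 (hk.2 l h)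

theorem RecSet.exists_firstHit {S : Set ℕ} (hS : RecSet S) : ∃ k, FirstHit S k := by
  classical
  obtain ⟨e, he⟩ := hS
  have h : ∃ k, Hit S k := by
    have := he e
    rw [Part.eq_some_iff, Code.evaln_complete] at this
    obtain ⟨s, hs⟩ := this
    exact ⟨Nat.pair e s, by simpa [Hit] using hs⟩
  exact ⟨Nat.find h, Nat.find_spec h, fun j hj => Nat.find_min h hj⟩

theorem mem_diagGame_iff {S : Set ℕ} {k : ℕ} (hS : RecSet S) (hk : FirstHit S k) :
    S ∈ diagGame ↔ k + 1 ∈ S :=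
  ⟨fun ⟨_, _, hl, h⟩ => hk.unique hl ▸ h, fun h => ⟨hS, k, hk, h⟩⟩

theorem Hit.congr {S T : Set ℕ} {k : ℕ} (h : ∀ x ≤ k, x ∈ S ↔ x ∈ T) : Hit S k ↔ Hit T k := by
  have h' := h _ (Nat.unpair_left_le k)
  unfold Hit
  by_cases hm : k.unpair.1 ∈ S
  · rw [if_pos hm, if_pos (h'.1 hm)]
  · rw [if_neg hm, if_neg (mt h'.2 hm)]

theorem FirstHit.congr {S T : Set ℕ} {k : ℕ} (h : ∀ x ≤ k, x ∈ S ↔ x ∈ T)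
    (hS : FirstHit S k) : FirstHit T k :=
  ⟨(Hit.congr h).1 hS.1, fun j hj hT =>
    hS.2 j hj ((Hit.congr fun x hx => h x (hx.trans hj.le)).2 hT)⟩

theorem recSet_of_finite {S : Set ℕ} (hS : S.Finite) : RecSet S := by
  classical
  have hp : PrimrecPred (fun x => x ∈ S) := by
    induction S, hS using Set.Finite.induction_on with
    | empty => exact (PrimrecPred.not (p := fun x : ℕ => x = x)
        (Primrec.eq.comp .id .id)).of_eq (by simp)
    | @insert a _ _ _ ih =>
      exact ((Primrec.eq.comp .id (.const a)).or ih).of_eq (by simp)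
  have hc : Computable (fun x => if x ∈ S then 1 else 0) :=
    (Primrec.ite hp (.const 1) (.const 0)).to_comp
  obtain ⟨c, hc⟩ := Code.exists_code.1 (Partrec.nat_iff.1 hc.partrec)
  refine ⟨Encodable.encode c, fun x => ?_⟩
  rw [Denumerable.ofNat_encode, hc]
  simp

/-- The set that disagrees with every diagonal computation `φ_n n`, `n ≤ M`, halting within `M`
steps. -/
def diagSet (M : ℕ) : Set ℕ :=
  {n | n ≤ M ∧ Code.evaln M (Denumerable.ofNat Code n) n = some 0}

theorem not_hit_diag {M k : ℕ} (hk : k ≤ M) : ¬ Hit (diagSet M) k := by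
  intro h
  have h' := Code.evaln_mono ((Nat.unpair_right_le k).trans hk) h
  have hn := (Nat.unpair_left_le k).trans hk
  by_cases hm : k.unpair.1 ∈ diagSet M
  · simp [hm, hm.2] at h'
  · simp only [hm, if_false] at h'
    exact hm ⟨hn, h'⟩

/-- Beyond any bound `M` there are two finite coalitions, equal up to `M`, exactly one of which
wins. -/
theorem exists_pivot (M : ℕ) : ∃ A B : Set ℕ, RecSet A ∧ RecSet B ∧
    (∀ x ≤ M, x ∈ A ↔ x ∈ B) ∧ A ∈ diagGame ∧ B ∉ diagGame := by
  have hT : (diagSet M).Finite := (Set.finite_Iic M).subset fun x hx => hx.1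
  obtain ⟨k, hk⟩ := (recSet_of_finite hT).exists_firstHit
  have hM : M < k := not_le.1 fun h => not_hit_diag h hk.1
  have hA := recSet_of_finite (hT.insert (k + 1))
  have hB := recSet_of_finite (hT.sdiff (t := {k + 1}))
  refine ⟨_, _, hA, hB, fun x hx => ?_, ?_, ?_⟩
  · have : x ≠ k + 1 := by omega
    simp [this]
  · rw [mem_diagGame_iff hA (hk.congr fun x hx => ?_)]
    · simp
    · have : x ≠ k + 1 := by omega
      simp [this]
  · rw [mem_diagGame_iff hB (hk.congr fun x hx => ?_)]
    · simp
    · have : x ≠ k + 1 := by omega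
      simp [this]

/-- The search for the first success, run with the `e`-th partial recursive function in place of
a characteristic function, followed by the query at the next number. -/
def search (e : ℕ) : Part ℕ :=
  (Nat.rfind fun k => ((Denumerable.ofNat Code e).eval k.unpair.1).map fun v =>
    decide (Code.evaln k.unpair.2 (Denumerable.ofNat Code k.unpair.1) k.unpair.1 = some v)).bind
  fun k => (Denumerable.ofNat Code e).eval (k + 1)

theorem partrec_search : Partrec search := by
  have ev : Partrec₂ fun e n : ℕ => (Denumerable.ofNat Code e).eval n :=
    Code.eval_part.comp ((Computable.ofNat Code).comp .fst) .snd
  have fu : Primrec fun p : (ℕ × ℕ) × ℕ => p.1.2.unpair :=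
    Primrec.unpair.comp (Primrec.snd.comp .fst)
  have hev : Primrec fun p : (ℕ × ℕ) × ℕ =>
      Code.evaln p.1.2.unpair.2 (Denumerable.ofNat Code p.1.2.unpair.1) p.1.2.unpair.1 :=
    Code.primrec_evaln.comp (.pair (.pair (Primrec.snd.comp fu)
      ((Primrec.ofNat Code).comp (Primrec.fst.comp fu))) (Primrec.fst.comp fu))
  have hd : Primrec fun p : (ℕ × ℕ) × ℕ => decide
      (Code.evaln p.1.2.unpair.2 (Denumerable.ofNat Code p.1.2.unpair.1) p.1.2.unpair.1
        = some p.2) :=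
    (Primrec.eq.comp hev (Primrec.option_some.comp .snd)).decide
  have ht : Partrec₂ fun e k : ℕ =>
      ((Denumerable.ofNat Code e).eval k.unpair.1).map fun v => decide
        (Code.evaln k.unpair.2 (Denumerable.ofNat Code k.unpair.1) k.unpair.1 = some v) :=
    Partrec.map (ev.comp .fst (Computable.fst.comp (Computable.unpair.comp .snd))) hd.to_comp
  exact (Partrec.rfind ht).bind (ev.comp .fst (Computable.succ.comp .snd))

theorem search_eq {e : ℕ} {S : Set ℕ} {k : ℕ} (he : CharIndex e S) (hk : FirstHit S k) :
    search e = (Denumerable.ofNat Code e).eval (k + 1) := by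
  classical
  have : (Nat.rfind fun k => ((Denumerable.ofNat Code e).eval k.unpair.1).map fun v =>
      decide (Code.evaln k.unpair.2 (Denumerable.ofNat Code k.unpair.1) k.unpair.1 = some v))
      = Part.some k := by
    refine Part.eq_some_iff.2 (Nat.mem_rfind.2 ?_)
    simp only [he _, Part.map_some, Part.mem_some_iff]
    refine ⟨Eq.symm ?_, fun hj => Eq.symm ?_⟩
    · rw [decide_eq_true_iff]
      exact hk.1
    · rw [decide_eq_false_iff_not]
      exact hk.2 _ hj
  rw [search, this, Part.bind_some]

/-- There exists a δ-computable simple game with no finite carrier. -/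
theorem stmt19 :
    ∃ ω : Set (Set ℕ), (∀ S ∈ ω, RecSet S) ∧ DeltaComputable ω ∧
      ¬ ∃ S : Set ℕ, RecSet S ∧ S.Finite ∧
          ∀ T : Set ℕ, RecSet T → (T ∈ ω ↔ S ∩ T ∈ ω) := by
  refine ⟨diagGame, fun S h => h.1, ⟨search, Partrec.nat_iff.1 partrec_search, ?_⟩, ?_⟩
  · intro e S he
    obtain ⟨k, hk⟩ := RecSet.exists_firstHit ⟨e, he⟩
    rw [search_eq he hk, he]
    have h := mem_diagGame_iff ⟨e, he⟩ hk
    by_cases hw : S ∈ diagGame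
    · rw [if_pos hw, if_pos (h.1 hw)]
    · rw [if_neg hw, if_neg (mt h.2 hw)]
  · rintro ⟨S, -, hfin, hcar⟩
    obtain ⟨M, hM⟩ := hfin.bddAbove
    obtain ⟨A, B, hA, hB, hAB, hwin, hlose⟩ := exists_pivot M
    have : S ∩ A = S ∩ B := by
      ext x
      exact and_congr_right fun hx => hAB x (hM hx)
    exact hlose ((hcar B hB).2 (this ▸ (hcar A hA).1 hwin))
end
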